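/- arXiv:2403.16735 — 2 statements merged into one kernel-verified Lean document; each statement's English description precedes it below -/
import Mathlib

section
/- For every nonnegative integer n, ped(225n + 43) ≡ 0 (mod 24). -/
/-- `ped n` is the number of partitions of `n` in which the even parts are
distinct (and the odd parts are unrestricted). -/
def ped (n : ℕ) : ℕ :=
  Fintype.card {p : n.Partition // ∀ x ∈ p.parts, Even x → p.parts.count x ≤ 1}

open PowerSeries Finset.HasAntidiagonal

/-- A weight function all of whose fibres are finite. -/
def FiniteFibers {α : Type*} (e : α → ℕ) : Prop := ∀ n, Finite {a // e a = n}

/-- The generating series `∑ a, X ^ e a` of a weight function `e`. -/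
noncomputable def theta (R : Type*) [CommRing R] {α : Type*} (e : α → ℕ) : R⟦X⟧ :=
  PowerSeries.mk fun n ↦ (Nat.card {a // e a = n} : R)

section Theta

variable {R S : Type*} [CommRing R] [CommRing S] {α β : Type*} {e : α → ℕ} {f : β → ℕ}

lemma FiniteFibers.add (he : FiniteFibers e) (hf : FiniteFibers f) :
    FiniteFibers fun p : α × β ↦ e p.1 + f p.2 := by
  intro n
  have h1 : {a | e a ≤ n}.Finite := by
    have : {a | e a ≤ n} = ⋃ i ∈ Set.Iic n, {a | e a = i} := by ext; simp
    rw [this]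
    exact (Set.finite_Iic n).biUnion fun i _ ↦ he i
  have h2 : {b | f b ≤ n}.Finite := by
    have : {a | f a ≤ n} = ⋃ i ∈ Set.Iic n, {a | f a = i} := by ext; simp
    rw [this]
    exact (Set.finite_Iic n).biUnion fun i _ ↦ hf i
  exact ((h1.prod h2).subset fun p hp ↦ by
    simp only [Set.mem_ofPred_eq, Set.mem_prod] at hp ⊢; omega :
      {p : α × β | e p.1 + f p.2 = n}.Finite)

lemma FiniteFibers.sumElim (he : FiniteFibers e) (hf : FiniteFibers f) :
    FiniteFibers (Sum.elim e f) := fun n ↦ by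
  have : Finite ({a // e a = n} ⊕ {b // f b = n}) :=
    have := he n
    have := hf n
    inferInstance
  have E : {p // Sum.elim e f p = n} ≃ {a // e a = n} ⊕ {b // f b = n} :=
    Equiv.subtypeSum
  exact Finite.of_equiv _ E.symm

lemma FiniteFibers.const_mul (he : FiniteFibers e) {c : ℕ} (hc : c ≠ 0) :
    FiniteFibers fun a ↦ c * e a := fun n ↦ by
  have := he (n / c)
  refine Finite.of_injective (fun a : {a // c * e a = n} ↦
    (⟨a.1, (Nat.div_eq_of_eq_mul_right (Nat.pos_of_ne_zero hc) a.2.symm).symm⟩ :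
      {a // e a = n / c})) fun a b h ↦ ?_
  simpa [Subtype.ext_iff] using h

lemma FiniteFibers.of_natAbs_le {e : ℤ → ℕ} (h : ∀ k, k.natAbs ≤ e k + 1) : FiniteFibers e :=
  fun n ↦ ((Set.finite_Icc (-(n + 1 : ℤ)) (n + 1)).subset fun k hk ↦ by
    have := h k
    simp only [Set.mem_ofPred_eq, Set.mem_Icc] at hk ⊢; omega : {k : ℤ | e k = n}.Finite)

lemma FiniteFibers.of_le {e : ℕ → ℕ} (h : ∀ k, k ≤ e k) : FiniteFibers e :=
  fun n ↦ ((Set.finite_Iic n).subset fun k hk ↦ by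
    have := h k
    simp only [Set.mem_ofPred_eq, Set.mem_Iic] at hk ⊢; omega : {k : ℕ | e k = n}.Finite)

@[simp] lemma coeff_theta (n : ℕ) : coeff n (theta R e) = Nat.card {a // e a = n} :=
  coeff_mk _ _

lemma coeff_theta_eq_zero {n : ℕ} (h : ∀ a, e a ≠ n) : coeff n (theta R e) = 0 := by
  have : IsEmpty {a // e a = n} := ⟨fun a ↦ h a.1 a.2⟩
  simp

@[simp] lemma map_theta (g : R →+* S) : (theta R e).map g = theta S e := by
  ext n; simp

lemma theta_mul (he : FiniteFibers e) (hf : FiniteFibers f) :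
    theta R e * theta R f = theta R fun p : α × β ↦ e p.1 + f p.2 := by
  ext n
  have (x : antidiagonal n) : Finite ({a // e a = x.1.1} × {b // f b = x.1.2}) :=
    have := he x.1.1
    have := hf x.1.2
    inferInstance
  let E : {p : α × β // e p.1 + f p.2 = n} ≃
      Σ x : antidiagonal n, {a // e a = x.1.1} × {b // f b = x.1.2} :=
    { toFun p := ⟨⟨(e p.1.1, f p.1.2), mem_antidiagonal.2 p.2⟩, ⟨p.1.1, rfl⟩, ⟨p.1.2, rfl⟩⟩
      invFun y := ⟨(y.2.1.1, y.2.2.1), by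
        rw [y.2.1.2, y.2.2.2]; exact mem_antidiagonal.1 y.1.2⟩
      left_inv p := rfl
      right_inv := by
        rintro ⟨⟨⟨i, j⟩, h⟩, ⟨a, ha⟩, ⟨b, hb⟩⟩
        change e a = i at ha
        change f b = j at hb
        subst ha hb
        rfl }
  rw [coeff_mul, coeff_theta, Nat.card_congr E, Nat.card_sigma, ← Finset.sum_attach]
  simp [Nat.card_prod, Finset.univ_eq_attach]

lemma theta_sum (he : FiniteFibers e) (hf : FiniteFibers f) :
    theta R (Sum.elim e f) = theta R e + theta R f := by
  ext n
  have := he n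
  have := hf n
  have E : {p // Sum.elim e f p = n} ≃ {a // e a = n} ⊕ {b // f b = n} :=
    Equiv.subtypeSum
  simp [Nat.card_congr E, Nat.card_sum]

lemma theta_eq_of_bijective {g : β → α} (hg : g.Bijective) (h : ∀ b, e (g b) = f b) :
    theta R e = theta R f := by
  ext n
  rw [coeff_theta, coeff_theta]
  congr 1
  exact (Nat.card_congr ((Equiv.ofBijective g hg).subtypeEquiv fun b ↦ by simp [h])).symm

lemma expand_theta {c : ℕ} (hc : c ≠ 0) :
    (theta R e).expand c hc = theta R fun a ↦ c * e a := by
  ext n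
  rw [coeff_expand]
  split_ifs with h
  · obtain ⟨m, rfl⟩ := h
    simp [hc]
  · exact (coeff_theta_eq_zero fun a ha ↦ h ⟨_, ha.symm⟩).symm

lemma X_mul_theta : X * theta R e = theta R fun a ↦ e a + 1 := by
  ext n
  cases n with
  | zero => simp
  | succ n => rw [coeff_succ_X_mul]; simp

end Theta

/-- Triangular numbers, indexed by `ℤ`. -/
def tri (k : ℤ) : ℕ := (k * (k + 1) / 2).toNat
/-- Squares, indexed by `ℤ`. -/
def square (k : ℤ) : ℕ := (k ^ 2).toNat
/-- Generalized pentagonal numbers. -/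
def pent (k : ℤ) : ℕ := (k * (3 * k + 1) / 2).toNat
/-- Generalized octagonal numbers. -/
def oct (k : ℤ) : ℕ := (k * (3 * k + 2)).toNat

lemma two_mul_tri (k : ℤ) : 2 * (tri k : ℤ) = k * (k + 1) := by
  have h : 0 ≤ k * (k + 1) := by
    rcases le_or_gt 0 k with h | h
    · positivity
    · exact mul_nonneg_of_nonpos_of_nonpos (by omega) (by omega)
  have := (Int.even_mul_succ_self k).two_dvd
  rw [tri]; omega

lemma square_cast (k : ℤ) : (square k : ℤ) = k ^ 2 := Int.toNat_of_nonneg (by positivity)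

lemma two_mul_pent (k : ℤ) : 2 * (pent k : ℤ) = k * (3 * k + 1) := by
  have h : 0 ≤ k * (3 * k + 1) := by
    rcases le_or_gt 0 k with h | h
    · positivity
    · exact mul_nonneg_of_nonpos_of_nonpos (by omega) (by omega)
  have : 2 ∣ k * (3 * k + 1) := by
    have := (Int.even_mul_succ_self k).two_dvd
    have h3 : k * (3 * k + 1) = 2 * k ^ 2 + k * (k + 1) := by ring
    omega
  rw [pent]; omega

lemma oct_cast (k : ℤ) : (oct k : ℤ) = k * (3 * k + 2) := by
  refine Int.toNat_of_nonneg ?_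
  rcases le_or_gt 0 k with h | h
  · positivity
  · exact mul_nonneg_of_nonpos_of_nonpos (by omega) (by omega)

lemma finiteFibers_tri : FiniteFibers tri := .of_natAbs_le fun k ↦ by
  have := two_mul_tri k
  zify
  rcases abs_cases k with h | h <;> nlinarith

lemma finiteFibers_square : FiniteFibers square := .of_natAbs_le fun k ↦ by
  have := square_cast k
  zify
  rcases abs_cases k with h | h <;> nlinarith

lemma finiteFibers_pent : FiniteFibers pent := .of_natAbs_le fun k ↦ by
  have := two_mul_pent k
  zify
  rcases abs_cases k with h | h <;> nlinarith

lemma finiteFibers_oct : FiniteFibers oct := .of_natAbs_le fun k ↦ by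
  have := oct_cast k
  zify
  rcases abs_cases k with h | h <;> nlinarith

lemma tri_nat_le (k : ℕ) : k ≤ tri k := by
  have := two_mul_tri k
  zify; nlinarith

lemma finiteFibers_tri_nat : FiniteFibers fun k : ℕ ↦ tri k := .of_le tri_nat_le

lemma theta_tri (R : Type*) [CommRing R] :
    theta R tri = 2 * theta R fun k : ℕ ↦ tri k := by
  rw [two_mul, ← theta_sum finiteFibers_tri_nat finiteFibers_tri_nat]
  refine theta_eq_of_bijective (g := Sum.elim (fun k : ℕ ↦ (k : ℤ)) fun k : ℕ ↦ -1 - (k : ℤ))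
    ⟨?_, fun k ↦ ?_⟩ ?_
  · rintro (a | a) (b | b) h <;> simp at h ⊢ <;> omega
  · rcases le_or_gt 0 k with h | h
    · exact ⟨.inl k.toNat, by simp; omega⟩
    · exact ⟨.inr (-1 - k).toNat, by simp; omega⟩
  · rintro (a | a)
    · simp
    · have h1 := two_mul_tri a
      have h2 := two_mul_tri (-1 - a)
      simp only [Sum.elim_inr]
      zify
      linarith

lemma theta_tri_trisect (R : Type*) [CommRing R] :
    theta R tri = 2 * (theta R pent).expand 3 three_ne_zero +
      X * ((theta R tri).expand 3 three_ne_zero).expand 3 three_ne_zero := by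
  have h3 : FiniteFibers fun k ↦ 3 * (3 * tri k) + 1 := .of_natAbs_le fun k ↦ by
    have := two_mul_tri k
    zify
    rcases abs_cases k with h | h <;> nlinarith
  have hp := finiteFibers_pent.const_mul three_ne_zero
  rw [expand_theta, expand_theta, expand_theta, X_mul_theta, two_mul, add_assoc, ← theta_sum hp h3,
    ← theta_sum hp (hp.sumElim h3)]
  refine theta_eq_of_bijective
    (g := Sum.elim (fun k ↦ 3 * k) (Sum.elim (fun k ↦ -1 - 3 * k) fun k ↦ 3 * k + 1))
    ⟨?_, fun k ↦ ?_⟩ ?_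
  · rintro (a | a | a) (b | b | b) h <;> simp at h ⊢ <;> omega
  · obtain h | h | h : k % 3 = 0 ∨ k % 3 = 2 ∨ k % 3 = 1 := by omega
    · exact ⟨.inl (k / 3), by simp; omega⟩
    · exact ⟨.inr (.inl (-1 - k / 3)), by simp; omega⟩
    · exact ⟨.inr (.inr (k / 3)), by simp; omega⟩
  · rintro (a | a | a) <;> simp only [Sum.elim_inr, Sum.elim_inl] <;> zify
    · have h1 := two_mul_tri (3 * a)
      have h2 := two_mul_pent a
      linarith
    · have h1 := two_mul_tri (-1 - 3 * a)
      have h2 := two_mul_pent a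
      linarith
    · have h1 := two_mul_tri (3 * a + 1)
      have h2 := two_mul_tri a
      linarith

lemma theta_square_trisect (R : Type*) [CommRing R] :
    theta R square = ((theta R square).expand 3 three_ne_zero).expand 3 three_ne_zero +
      2 * (X * (theta R oct).expand 3 three_ne_zero) := by
  have h0 := (finiteFibers_square.const_mul three_ne_zero).const_mul three_ne_zero
  have h1 : FiniteFibers fun k ↦ 3 * oct k + 1 := .of_natAbs_le fun k ↦ by
    have := oct_cast k
    zify
    rcases abs_cases k with h | h <;> nlinarith
  rw [expand_theta, expand_theta, expand_theta, X_mul_theta, two_mul, ← theta_sum h1 h1,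
    ← theta_sum h0 (h1.sumElim h1)]
  refine theta_eq_of_bijective
    (g := Sum.elim (fun k ↦ 3 * k) (Sum.elim (fun k ↦ 3 * k + 1) fun k ↦ -1 - 3 * k))
    ⟨?_, fun k ↦ ?_⟩ ?_
  · rintro (a | a | a) (b | b | b) h <;> simp at h ⊢ <;> omega
  · obtain h | h | h : k % 3 = 0 ∨ k % 3 = 1 ∨ k % 3 = 2 := by omega
    · exact ⟨.inl (k / 3), by simp; omega⟩
    · exact ⟨.inr (.inl (k / 3)), by simp; omega⟩
    · exact ⟨.inr (.inr (-1 - k / 3)), by simp; omega⟩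
  · rintro (a | a | a) <;> simp only [Sum.elim_inr, Sum.elim_inl] <;> zify <;>
      simp only [square_cast, oct_cast] <;> ring

lemma theta_tri_sq (R : Type*) [CommRing R] :
    theta R tri ^ 2 = 2 * (theta R square * (theta R tri).expand 2 two_ne_zero) := by
  have h2 := finiteFibers_tri.const_mul two_ne_zero
  have h3 := finiteFibers_square.add h2
  rw [expand_theta, sq, theta_mul finiteFibers_tri finiteFibers_tri,
    theta_mul finiteFibers_square h2, two_mul, ← theta_sum h3 h3]
  refine theta_eq_of_bijective
    (g := Sum.elim (fun p : ℤ × ℤ ↦ (p.2 + p.1, p.2 - p.1)) fun p ↦ (p.1 + p.2, p.1 - p.2 - 1))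
    ⟨?_, fun k ↦ ?_⟩ ?_
  · rintro (a | a) (b | b) h <;> simp [Prod.ext_iff] at h ⊢ <;> omega
  · obtain h | h : (k.1 - k.2) % 2 = 0 ∨ (k.1 - k.2) % 2 = 1 := by omega
    · exact ⟨.inl ((k.1 - k.2) / 2, (k.1 + k.2) / 2), by simp [Prod.ext_iff]; omega⟩
    · exact ⟨.inr ((k.1 + k.2 + 1) / 2, (k.1 - k.2) / 2), by simp [Prod.ext_iff]; omega⟩
  · rintro (⟨m, t⟩ | ⟨m, t⟩) <;> simp only [Sum.elim_inr, Sum.elim_inl] <;> zify <;>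
      simp only [square_cast]
    · linarith [two_mul_tri (t + m), two_mul_tri (t - m), two_mul_tri t]
    · linarith [two_mul_tri (m + t), two_mul_tri (m - t - 1), two_mul_tri t]

lemma theta_tri_mul_expand (R : Type*) [CommRing R] :
    theta R tri * (theta R tri).expand 2 two_ne_zero =
      (theta R square).expand 3 three_ne_zero * (theta R tri).expand 3 three_ne_zero +
        2 * (theta R pent * theta R oct) := by
  have ht2 := finiteFibers_tri.const_mul two_ne_zero
  have ht3 := finiteFibers_tri.const_mul three_ne_zero
  have hs3 := finiteFibers_square.const_mul three_ne_zero
  have h1 := hs3.add ht3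
  have h2 := finiteFibers_pent.add finiteFibers_oct
  rw [expand_theta, expand_theta, expand_theta, theta_mul finiteFibers_tri ht2, theta_mul hs3 ht3,
    theta_mul finiteFibers_pent finiteFibers_oct, two_mul, ← theta_sum h2 h2,
    ← theta_sum h1 (h2.sumElim h2)]
  refine theta_eq_of_bijective
    (g := Sum.elim (fun p : ℤ × ℤ ↦ (2 * p.1 + p.2, p.1 - p.2 - 1))
      (Sum.elim (fun p ↦ (2 * p.2 - p.1, p.2 + p.1))
        fun p ↦ (-2 * p.2 + p.1 - 1, -p.2 - p.1 - 1)))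
    ⟨?_, fun k ↦ ?_⟩ ?_
  · rintro (a | a | a) (b | b | b) h <;> simp [Prod.ext_iff] at h ⊢ <;> omega
  · obtain h | h | h : (k.1 + k.2) % 3 = 2 ∨ (k.1 + k.2) % 3 = 0 ∨ (k.1 + k.2) % 3 = 1 := by omega
    · exact ⟨.inl ((k.1 + k.2 + 1) / 3, (k.1 - 2 * k.2 - 2) / 3),
        by simp [Prod.ext_iff]; omega⟩
    · exact ⟨.inr (.inl ((2 * k.2 - k.1) / 3, (k.1 + k.2) / 3)),
        by simp [Prod.ext_iff]; omega⟩
    · exact ⟨.inr (.inr ((k.1 - 2 * k.2 - 1) / 3, -(k.1 + k.2 + 2) / 3)),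
        by simp [Prod.ext_iff]; omega⟩
  · rintro (⟨b, j⟩ | ⟨j, b⟩ | ⟨j, b⟩) <;> simp only [Sum.elim_inr, Sum.elim_inl] <;> zify <;>
      simp only [square_cast, oct_cast]
    · linarith [two_mul_tri (2 * b + j), two_mul_tri (b - j - 1), two_mul_tri j]
    · linarith [two_mul_tri (2 * b - j), two_mul_tri (b + j), two_mul_pent j]
    · linarith [two_mul_tri (-2 * b + j - 1), two_mul_tri (-b - j - 1), two_mul_pent j]

lemma theta_square (R : Type*) [CommRing R] :
    theta R square = 1 + 2 * theta R fun k : ℕ ↦ (k + 1) ^ 2 := by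
  have h1 : FiniteFibers fun k : ℕ ↦ (k + 1) ^ 2 := .of_le fun k ↦ by nlinarith
  have h0 : FiniteFibers fun _ : Unit ↦ 0 := fun n ↦ inferInstance
  have : (1 : R⟦X⟧) = theta R fun _ : Unit ↦ 0 := by
    ext n
    rw [coeff_theta, coeff_one]
    split_ifs with h
    · subst h; simp
    · have : IsEmpty {a : Unit // 0 = n} := ⟨fun a ↦ h a.2.symm⟩
      simp
  rw [this, two_mul, ← theta_sum h1 h1, ← theta_sum h0 (h1.sumElim h1)]
  refine theta_eq_of_bijective
    (g := Sum.elim (fun _ ↦ 0) (Sum.elim (fun k : ℕ ↦ (k + 1 : ℤ)) fun k : ℕ ↦ -1 - (k : ℤ)))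
    ⟨?_, fun k ↦ ?_⟩ ?_
  · rintro (a | a | a) (b | b | b) h <;> simp at h ⊢ <;> omega
  · obtain h | h | h := lt_trichotomy k 0
    · exact ⟨.inr (.inr (-1 - k).toNat), by simp; omega⟩
    · exact ⟨.inl (), by simp [h]⟩
    · exact ⟨.inr (.inl (k - 1).toNat), by simp; omega⟩
  · rintro (a | a | a) <;> simp only [Sum.elim_inr, Sum.elim_inl] <;> zify <;>
      simp only [square_cast] <;> ring

/-- Twice the sum over the off-diagonal pairs gives the cross terms of the square. -/
lemma theta_sq_eq (R : Type*) [CommRing R] {e : ℕ → ℕ} (he : FiniteFibers e) :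
    ∃ Z : R⟦X⟧, theta R e ^ 2 = (theta R e).expand 2 two_ne_zero + 2 * Z := by
  have h1 := he.const_mul two_ne_zero
  have h2 : FiniteFibers fun p : ℕ × ℕ ↦ e p.1 + e (p.1 + p.2 + 1) := fun n ↦ by
    have := he.add he n
    refine Finite.of_injective (fun p : {p : ℕ × ℕ // e p.1 + e (p.1 + p.2 + 1) = n} ↦
      (⟨(p.1.1, p.1.1 + p.1.2 + 1), p.2⟩ : {p : ℕ × ℕ // e p.1 + e p.2 = n})) fun p q h ↦ ?_
    simp only [Subtype.mk.injEq, Prod.mk.injEq] at h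
    ext <;> omega
  refine ⟨theta R fun p : ℕ × ℕ ↦ e p.1 + e (p.1 + p.2 + 1), ?_⟩
  rw [sq, theta_mul he he, expand_theta, two_mul, ← theta_sum h2 h2, ← theta_sum h1 (h2.sumElim h2)]
  refine theta_eq_of_bijective
    (g := Sum.elim (fun k ↦ (k, k)) (Sum.elim (fun p : ℕ × ℕ ↦ (p.1, p.1 + p.2 + 1))
      fun p : ℕ × ℕ ↦ (p.1 + p.2 + 1, p.1))) ⟨?_, fun k ↦ ?_⟩ ?_
  · rintro (a | a | a) (b | b | b) h <;> simp [Prod.ext_iff] at h ⊢ <;> omega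
  · obtain h | h | h := lt_trichotomy k.1 k.2
    · exact ⟨.inr (.inl (k.1, k.2 - k.1 - 1)), by simp [Prod.ext_iff]; omega⟩
    · exact ⟨.inl k.1, by simp [Prod.ext_iff, h]⟩
    · exact ⟨.inr (.inr (k.2, k.1 - k.2 - 1)), by simp [Prod.ext_iff]; omega⟩
  · rintro (a | a | a) <;> simp only [Sum.elim_inr, Sum.elim_inl] <;> ring

open Finset in
/-- Shanks' finite form of Gauss's triangular number identity. -/
lemma sum_prod_eq_prod_mul_sum_tri {A : Type*} [CommRing A] (q : A) (n : ℕ) :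
    ∑ s ∈ range n, q ^ (s * (2 * n + 1)) *
        ((∏ i ∈ Ico s n, (1 - q ^ (2 * i + 2))) * ∏ i ∈ range s, (1 - q ^ (2 * i + 1))) =
      (∏ i ∈ range n, (1 - q ^ (2 * i + 1))) * ∑ s ∈ range (2 * n), q ^ tri s := by
  induction n with
  | zero => simp
  | succ n ih =>
    have htel : ∑ s ∈ range n, (q ^ (s * (2 * (n + 1) + 1)) *
        ((∏ i ∈ Ico s (n + 1), (1 - q ^ (2 * i + 2))) * ∏ i ∈ range s, (1 - q ^ (2 * i + 1))) -
        (1 - q ^ (2 * n + 1)) * (q ^ (s * (2 * n + 1)) *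
        ((∏ i ∈ Ico s n, (1 - q ^ (2 * i + 2))) * ∏ i ∈ range s, (1 - q ^ (2 * i + 1))))) =
        (∏ i ∈ range n, (1 - q ^ (2 * i + 1))) * q ^ (n * (2 * n + 1)) * (1 - q ^ (2 * n)) := by
      have := Finset.sum_range_sub (fun s ↦ ((∏ i ∈ Ico s n, (1 - q ^ (2 * i + 2))) *
        ∏ i ∈ range s, (1 - q ^ (2 * i + 1))) * q ^ (s * (2 * n + 1)) * (1 - q ^ (2 * s))) n
      simp only [Ico_self, prod_empty, mul_zero, pow_zero, sub_self, sub_zero, one_mul] at this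
      rw [← this]
      refine sum_congr rfl fun s hs ↦ ?_
      have hs := mem_range.1 hs
      rw [prod_Ico_succ_top hs.le, prod_range_succ, prod_eq_prod_Ico_succ_bot hs]
      ring
    rw [sum_sub_distrib, ← mul_sum, ih] at htel
    have h1 : tri (2 * n : ℕ) = n * (2 * n + 1) := by
      have := two_mul_tri (2 * n : ℕ)
      zify; push_cast at this ⊢; linarith
    have h2 : tri (2 * n + 1 : ℕ) = n * (2 * n + 1) + (2 * n + 1) := by
      have := two_mul_tri (2 * n + 1 : ℕ)
      zify; push_cast at this ⊢; linarith
    rw [sum_range_succ, sub_eq_iff_eq_add.1 htel, show 2 * (n + 1) = 2 * n + 1 + 1 by ring,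
      sum_range_succ _ (2 * n + 1), sum_range_succ _ (2 * n), h1, h2, prod_range_succ]
    simp only [Nat.Ico_succ_singleton, prod_singleton]
    ring

open Finset in
lemma coeff_theta_nat {R : Type*} [CommRing R] {e : ℕ → ℕ} (he : ∀ k, k ≤ e k) {n M : ℕ}
    (h : n < M) : coeff n (theta R e) = coeff n (∑ s ∈ range M, (X : R⟦X⟧) ^ e s) := by
  simp only [coeff_theta, map_sum, coeff_X_pow, sum_boole]
  congr 1
  exact Nat.subtype_card _ fun x ↦ by
    have := he x
    simp only [mem_filter, mem_range]; omega

/-- The signed generating function `∑ n, (-1) ^ n * ped n * X ^ n`. -/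
noncomputable def signedPed : ℤ⟦X⟧ := PowerSeries.mk fun n ↦ (-1) ^ n * (ped n : ℤ)

/-- The weight of `c` copies of the part `i` in `signedPed`. -/
def pedWeight (i c : ℕ) : ℤ := if Even i ∧ 1 < c then 0 else (-1) ^ (c * i)

lemma signedPed_eq_genFun : signedPed = Nat.Partition.genFun pedWeight := by
  ext n
  rw [signedPed, coeff_mk, Nat.Partition.coeff_genFun, ped, Fintype.card_subtype,
    Finset.card_filter]
  push_cast
  rw [Finset.mul_sum]
  refine Finset.sum_congr rfl fun p _ ↦ ?_
  rw [Finsupp.prod]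
  simp only [Multiset.toFinsupp_support, Multiset.toFinsupp_apply]
  split_ifs with h
  · have hw : ∀ i ∈ p.parts.toFinset,
        pedWeight i (p.parts.count i) = (-1) ^ (p.parts.count i * i) := fun i hi ↦ if_neg (by
      rintro ⟨h1, h2⟩
      have := h i (Multiset.mem_toFinset.1 hi) h1
      omega)
    rw [Finset.prod_congr rfl hw, Finset.prod_pow_eq_pow_sum, mul_one]
    congr 1
    conv_lhs => rw [← p.parts_sum, Finset.sum_multiset_count]
    simp
  · push Not at h
    obtain ⟨i, hi, h1, h2⟩ := h
    have hw : pedWeight i (p.parts.count i) = 0 := if_pos ⟨h1, h2⟩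
    rw [mul_zero, Finset.prod_eq_zero (Multiset.mem_toFinset.2 hi) hw]

open scoped PowerSeries.WithPiTopology in
/-- The factor contributed to `signedPed` by the part `i`. -/
noncomputable def pedFactor (i : ℕ) : ℤ⟦X⟧ :=
  1 + ∑' j, pedWeight i (j + 1) • X ^ (i * (j + 1))

open PowerSeries.WithPiTopology in
lemma pedFactor_odd_mul (i : ℕ) : pedFactor (2 * i + 1) * (1 + X ^ (2 * i + 1)) = 1 := by
  have hc : (-X ^ (2 * i + 1) : ℤ⟦X⟧).constantCoeff = 0 := by simp
  have h1 := tsum_pow_mul_one_sub_of_constantCoeff_eq_zero hc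
  rw [(summable_pow_of_constantCoeff_eq_zero hc).tsum_eq_zero_add, sub_neg_eq_add] at h1
  rw [← h1, pow_zero, pedFactor]
  congr 3
  ext1 j
  have : ¬ Even (2 * i + 1) := by simp
  rw [pedWeight, if_neg (fun h ↦ this h.1), neg_pow (X ^ _), ← pow_mul, mul_comm (j + 1), pow_mul,
    Odd.neg_one_pow ⟨i, rfl⟩]
  simp [zsmul_eq_mul]

open scoped PowerSeries.WithPiTopology in
lemma pedFactor_even (i : ℕ) : pedFactor (2 * i + 2) = 1 + X ^ (2 * i + 2) := by
  have hev : Even (2 * i + 2) := ⟨i + 1, by ring⟩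
  rw [pedFactor, tsum_eq_single 0 fun j hj ↦ by
    rw [pedWeight, if_pos ⟨hev, by omega⟩, zero_smul]]
  simp [pedWeight, hev]

lemma prod_pedFactor_mul (n : ℕ) :
    (∏ i ∈ Finset.range (2 * n), pedFactor (i + 1)) *
      ∏ i ∈ Finset.range n, (1 + X ^ (2 * i + 1)) = ∏ i ∈ Finset.range n, (1 + X ^ (2 * i + 2)) := by
  induction n with
  | zero => simp
  | succ n ih =>
    rw [show 2 * (n + 1) = 2 * n + 1 + 1 by ring]
    simp only [Finset.prod_range_succ]
    rw [pedFactor_even, ← ih]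
    linear_combination (∏ i ∈ Finset.range (2 * n), pedFactor (i + 1)) *
      (∏ i ∈ Finset.range n, (1 + X ^ (2 * i + 1))) * (1 + X ^ (2 * n + 2)) * pedFactor_odd_mul n

open PowerSeries.WithPiTopology in
lemma exists_X_pow_dvd_signedPed_sub (m : ℕ) : ∃ N, ∀ n, N ≤ n →
    X ^ m ∣ signedPed - ∏ i ∈ Finset.range n, pedFactor (i + 1) := by
  have H := (Nat.Partition.hasProd_genFun pedWeight).tendsto_prod_nat
  rw [← signedPed_eq_genFun, tendsto_iff_coeff_tendsto] at H
  have key : ∀ᶠ n in Filter.atTop, ∀ d ∈ Finset.range m,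
      coeff d (∏ i ∈ Finset.range n, pedFactor (i + 1)) = coeff d signedPed := by
    refine (Filter.eventually_all_finset _).2 fun d _ ↦ ?_
    have h := H d
    rw [nhds_discrete, Filter.tendsto_pure] at h
    exact h
  obtain ⟨N, hN⟩ := Filter.eventually_atTop.1 key
  refine ⟨N, fun n hn ↦ X_pow_dvd_iff.2 fun d hd ↦ ?_⟩
  rw [map_sub, hN n hn d (by simpa using hd), sub_self]

open Finset in
/-- Gauss's triangular number identity, to finite order and without division. -/
lemma X_pow_dvd_prod_sub_prod_mul_theta {c : ℕ} (hc : c ≠ 0) (n : ℕ) :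
    (X : ℤ⟦X⟧) ^ n ∣ (∏ i ∈ range n, (1 - (X ^ c) ^ (2 * i + 2))) -
      (∏ i ∈ range n, (1 - (X ^ c) ^ (2 * i + 1))) * theta ℤ fun k : ℕ ↦ c * tri k := by
  have h := sum_prod_eq_prod_mul_sum_tri (X ^ c : ℤ⟦X⟧) n
  have h1 : (X : ℤ⟦X⟧) ^ n ∣ (theta ℤ fun k : ℕ ↦ c * tri k) -
      ∑ s ∈ range (2 * n), (X ^ c) ^ tri s := by
    refine X_pow_dvd_iff.2 fun d hd ↦ ?_
    simp_rw [← pow_mul]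
    rw [map_sub, coeff_theta_nat (fun k ↦ (tri_nat_le k).trans
      (Nat.le_mul_of_pos_left _ (Nat.pos_of_ne_zero hc))) (show d < 2 * n by omega), sub_self]
  rcases n with _ | n
  · simp
  rw [sum_range_succ', ← range_eq_Ico] at h
  simp only [zero_mul, pow_zero, range_zero, prod_empty, one_mul, mul_one] at h
  have h2 : (X : ℤ⟦X⟧) ^ (n + 1) ∣ ∑ s ∈ range n, (X ^ c : ℤ⟦X⟧) ^ ((s + 1) * (2 * (n + 1) + 1)) *
      ((∏ i ∈ Ico (s + 1) (n + 1), (1 - (X ^ c) ^ (2 * i + 2))) *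
        ∏ i ∈ range (s + 1), (1 - (X ^ c) ^ (2 * i + 1))) := by
    refine dvd_sum fun s _ ↦ Dvd.dvd.mul_right ?_ _
    rw [← pow_mul]
    refine pow_dvd_pow _ ?_
    calc n + 1 ≤ 1 * (1 * (2 * (n + 1) + 1)) := by omega
      _ ≤ c * ((s + 1) * (2 * (n + 1) + 1)) := by gcongr <;> omega
  obtain ⟨u, hu⟩ := h1
  obtain ⟨v, hv⟩ := h2
  rw [hv] at h
  refine ⟨-v - (∏ i ∈ range (n + 1), (1 - (X ^ c) ^ (2 * i + 1))) * u, ?_⟩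
  linear_combination h - (∏ i ∈ range (n + 1), (1 - (X ^ c) ^ (2 * i + 1))) * hu

open Finset in
lemma signedPed_mul_theta_tri :
    signedPed * (theta ℤ fun k : ℕ ↦ tri k) = theta ℤ fun k : ℕ ↦ 2 * tri k := by
  rw [← sub_eq_zero]
  ext m
  obtain ⟨N, hN⟩ := exists_X_pow_dvd_signedPed_sub (m + 1)
  set n := N + m + 1
  obtain ⟨a, ha⟩ := hN (2 * n) (by omega)
  obtain ⟨b, hb⟩ := (pow_dvd_pow X (by omega : m + 1 ≤ n)).trans
    (X_pow_dvd_prod_sub_prod_mul_theta one_ne_zero n)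
  obtain ⟨d, hd⟩ := (pow_dvd_pow X (by omega : m + 1 ≤ n)).trans
    (X_pow_dvd_prod_sub_prod_mul_theta two_ne_zero n)
  have hP := prod_pedFactor_mul n
  have hsq (k : ℕ) : (1 - (X : ℤ⟦X⟧) ^ k) * (1 + X ^ k) = 1 - (X ^ 2) ^ k := by ring
  simp_rw [← hsq, prod_mul_distrib] at hd
  simp only [pow_one, one_mul] at hb
  set E := ∏ i ∈ range n, (1 - (X : ℤ⟦X⟧) ^ (2 * i + 1))
  set E' := ∏ i ∈ range n, (1 + (X : ℤ⟦X⟧) ^ (2 * i + 1))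
  set D := ∏ i ∈ range n, (1 - (X : ℤ⟦X⟧) ^ (2 * i + 2))
  set D' := ∏ i ∈ range n, (1 + (X : ℤ⟦X⟧) ^ (2 * i + 2))
  set P := ∏ i ∈ range (2 * n), pedFactor (i + 1)
  have hunit : IsUnit (E * E') := by
    rw [PowerSeries.isUnit_iff_constantCoeff]
    simp [E, E', map_prod]
  have hdvd : X ^ (m + 1) ∣ (E * E') *
      (signedPed * (theta ℤ fun k : ℕ ↦ tri k) - theta ℤ fun k : ℕ ↦ 2 * tri k) := by
    refine ⟨E * E' * (theta ℤ fun k : ℕ ↦ tri k) * a - D' * b + d, ?_⟩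
    linear_combination E * E' * (theta ℤ fun k : ℕ ↦ tri k) * ha - D' * hb + hd +
      E * (theta ℤ fun k : ℕ ↦ tri k) * hP
  rw [hunit.dvd_mul_left] at hdvd
  simpa using X_pow_dvd_iff.1 hdvd m (by omega)

lemma theta_tri_nat_ne_zero : (theta ℤ fun k : ℕ ↦ tri k) ≠ 0 := fun h ↦ by
  have := coeff_theta_nat (R := ℤ) tri_nat_le (show 0 < 1 by omega)
  rw [h] at this
  simp [tri] at this

lemma natCast_powerSeries_ne_zero {n : ℕ} (hn : n ≠ 0) : (n : ℤ⟦X⟧) ≠ 0 := fun h ↦ by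
  have := congrArg (PowerSeries.constantCoeff (R := ℤ)) h
  simp [hn] at this

lemma theta_tri_nat_sq : (theta ℤ fun k : ℕ ↦ tri k) ^ 2 =
    theta ℤ square * (theta ℤ fun k : ℕ ↦ tri k).expand 2 two_ne_zero := by
  have h := theta_tri_sq ℤ
  rw [theta_tri, map_mul, map_ofNat] at h
  refine mul_left_cancel₀ (natCast_powerSeries_ne_zero four_ne_zero) ?_
  push_cast
  linear_combination h

lemma theta_tri_nat_trisect : (theta ℤ fun k : ℕ ↦ tri k) =
    (theta ℤ pent).expand 3 three_ne_zero +
      X * ((theta ℤ fun k : ℕ ↦ tri k).expand 3 three_ne_zero).expand 3 three_ne_zero := by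
  have h := theta_tri_trisect ℤ
  rw [theta_tri, map_mul, map_mul, map_ofNat, map_ofNat] at h
  refine mul_left_cancel₀ (natCast_powerSeries_ne_zero two_ne_zero) ?_
  push_cast
  linear_combination h

lemma two_mul_theta_tri_nat_mul_expand : 2 * ((theta ℤ fun k : ℕ ↦ tri k) *
      (theta ℤ fun k : ℕ ↦ tri k).expand 2 two_ne_zero) =
    (theta ℤ square).expand 3 three_ne_zero *
      (theta ℤ fun k : ℕ ↦ tri k).expand 3 three_ne_zero + theta ℤ pent * theta ℤ oct := by
  have h := theta_tri_mul_expand ℤ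
  rw [theta_tri, map_mul, map_mul, map_ofNat, map_ofNat] at h
  refine mul_left_cancel₀ (natCast_powerSeries_ne_zero two_ne_zero) ?_
  push_cast
  linear_combination h

lemma signedPed_mul_theta_square :
    signedPed * theta ℤ square = theta ℤ fun k : ℕ ↦ tri k := by
  refine mul_left_cancel₀ theta_tri_nat_ne_zero ?_
  have h := signedPed_mul_theta_tri
  rw [← expand_theta two_ne_zero] at h
  linear_combination theta ℤ square * h - theta_tri_nat_sq

lemma coeff_X_pow_mul_expand_three {R : Type*} [CommRing R] (a : R⟦X⟧) {r s : ℕ} (hr : r < 3)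
    (hs : s < 3) (n : ℕ) : coeff (3 * n + s) (X ^ r * a.expand 3 three_ne_zero) =
      if r = s then coeff n a else 0 := by
  rw [coeff_X_pow_mul', coeff_expand]
  split_ifs
  · congr 2; omega
  all_goals first | rfl | omega

lemma coeff_trisect_one {R : Type*} [CommRing R] (a b c : R⟦X⟧) (n : ℕ) :
    coeff (3 * n + 1) (X ^ 0 * a.expand 3 three_ne_zero + X ^ 1 * b.expand 3 three_ne_zero +
      X ^ 2 * c.expand 3 three_ne_zero) = coeff n b := by
  rw [map_add, map_add, coeff_X_pow_mul_expand_three _ (by omega) (by omega),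
    coeff_X_pow_mul_expand_three _ (by omega) (by omega),
    coeff_X_pow_mul_expand_three _ (by omega) (by omega)]
  simp

lemma exists_trisect {R : Type*} [CommRing R] (f : R⟦X⟧) : ∃ a b c : R⟦X⟧,
    f = X ^ 0 * a.expand 3 three_ne_zero + X ^ 1 * b.expand 3 three_ne_zero +
      X ^ 2 * c.expand 3 three_ne_zero := by
  refine ⟨mk fun n ↦ coeff (3 * n + 0) f, mk fun n ↦ coeff (3 * n + 1) f,
    mk fun n ↦ coeff (3 * n + 2) f, ?_⟩
  ext n
  obtain ⟨m, s, hs, rfl⟩ : ∃ m s, s < 3 ∧ n = 3 * m + s := ⟨n / 3, n % 3, by omega, by omega⟩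
  rw [map_add, map_add, coeff_X_pow_mul_expand_three _ (by omega) hs,
    coeff_X_pow_mul_expand_three _ (by omega) hs, coeff_X_pow_mul_expand_three _ (by omega) hs]
  interval_cases s <;> simp

lemma expand_three_eq_cube (f : (ZMod 3)⟦X⟧) : f.expand 3 three_ne_zero = f ^ 3 := by
  have h := MvPowerSeries.map_frobenius_expand (σ := Unit) (R := ZMod 3) 3 three_ne_zero (f := f)
  rw [ZMod.frobenius_zmod, MvPowerSeries.map_id] at h
  exact h

lemma three_dvd_ped (n : ℕ) : 3 ∣ ped (9 * n + 7) := by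
  let g := PowerSeries.map (Int.castRingHom (ZMod 3))
  have hG := congrArg g signedPed_mul_theta_square
  have h1 := congrArg g theta_tri_nat_sq
  have h2 := congrArg g theta_tri_nat_trisect
  have h3 := congrArg g two_mul_theta_tri_nat_mul_expand
  have h4 := theta_square_trisect (ZMod 3)
  simp only [g, map_mul, map_pow, map_add, map_expand, map_theta, map_X, map_ofNat] at hG h1 h2 h3
  have hcoeff : coeff (9 * n + 7) (PowerSeries.map (Int.castRingHom (ZMod 3)) signedPed) =
      (-1) ^ (9 * n + 7) * (ped (9 * n + 7) : ZMod 3) := by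
    simp [signedPed]
  have hne : theta (ZMod 3) square ≠ 0 := by
    rw [theta_square]
    intro h
    have h := congrArg (coeff 0) h
    rw [map_add, two_mul, map_add, coeff_theta_eq_zero (fun a ↦ by positivity)] at h
    simp at h
  generalize PowerSeries.map (Int.castRingHom (ZMod 3)) signedPed = G at *
  set φ := theta (ZMod 3) square
  set ψ := theta (ZMod 3) fun k : ℕ ↦ tri k
  set A := theta (ZMod 3) pent
  set Ω := theta (ZMod 3) oct
  obtain ⟨a, b, c, habc⟩ := exists_trisect G
  have key : G * φ.expand 3 three_ne_zero = ψ * φ ^ 2 := by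
    rw [expand_three_eq_cube, ← hG]; ring
  have hthree : (3 : (ZMod 3)⟦X⟧) = 0 := by
    rw [← map_ofNat (C (R := ZMod 3)) 3, show (OfNat.ofNat 3 : ZMod 3) = 0 by decide, map_zero]
  have hb : b * φ = φ.expand 3 three_ne_zero *
      (A * Ω + ψ.expand 3 three_ne_zero * φ.expand 3 three_ne_zero) := by
    have hexp : X ^ 0 * (a * φ).expand 3 three_ne_zero + X ^ 1 * (b * φ).expand 3 three_ne_zero +
        X ^ 2 * (c * φ).expand 3 three_ne_zero =
        X ^ 0 * (A * φ.expand 3 three_ne_zero ^ 2 +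
          X * (ψ.expand 3 three_ne_zero * Ω ^ 2)).expand 3 three_ne_zero +
        X ^ 1 * (φ.expand 3 three_ne_zero *
          (A * Ω + ψ.expand 3 three_ne_zero * φ.expand 3 three_ne_zero)).expand 3 three_ne_zero +
        X ^ 2 * (A * Ω ^ 2 + ψ.expand 3 three_ne_zero * φ.expand 3 three_ne_zero * Ω).expand 3
          three_ne_zero := by
      simp only [map_mul, map_add, map_pow, expand_X]
      generalize (φ.expand 3 three_ne_zero).expand 3 three_ne_zero = φ₉ at *
      generalize (ψ.expand 3 three_ne_zero).expand 3 three_ne_zero = ψ₉ at *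
      generalize A.expand 3 three_ne_zero = A₃ at *
      generalize Ω.expand 3 three_ne_zero = Ω₃ at *
      linear_combination key - φ.expand 3 three_ne_zero * habc + φ ^ 2 * h2 +
        (A₃ + X * ψ₉) * (φ + φ₉ + 2 * (X * Ω₃)) * h4 +
        (X * A₃ * φ₉ * Ω₃ + X ^ 2 * A₃ * Ω₃ ^ 2 + X ^ 2 * ψ₉ * φ₉ * Ω₃ + X ^ 3 * ψ₉ * Ω₃ ^ 2) *
          hthree
    ext m
    have := congrArg (coeff (3 * m + 1)) hexp
    rw [coeff_trisect_one, coeff_trisect_one] at this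
    exact this
  have hb2 : b = 2 * (ψ.expand 3 three_ne_zero * φ) := by
    refine mul_left_cancel₀ (pow_ne_zero 3 hne) ?_
    rw [expand_three_eq_cube φ, expand_three_eq_cube ψ] at *
    linear_combination φ ^ 2 * hb - φ ^ 5 * h3 - 2 * φ ^ 4 * ψ * h1
  have hz : coeff (3 * n + 2) b = 0 := by
    have : b = X ^ 0 * (2 * (ψ * φ.expand 3 three_ne_zero)).expand 3 three_ne_zero +
        X ^ 1 * (4 * (ψ * Ω)).expand 3 three_ne_zero := by
      rw [hb2]
      simp only [map_mul, map_ofNat]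
      linear_combination 2 * ψ.expand 3 three_ne_zero * h4
    rw [this, map_add, coeff_X_pow_mul_expand_three _ (by omega) (by omega),
      coeff_X_pow_mul_expand_three _ (by omega) (by omega)]
    simp
  have hz2 : coeff (9 * n + 7) G = 0 := by
    rw [habc, show 9 * n + 7 = 3 * (3 * n + 2) + 1 by ring, coeff_trisect_one, hz]
  rw [hz2] at hcoeff
  rw [← CharP.cast_eq_zero_iff (ZMod 3)]
  simpa using hcoeff.symm

lemma eight_dvd_ped (n : ℕ) : 8 ∣ ped (225 * n + 43) := by
  set Y := theta ℤ fun k : ℕ ↦ (k + 1) ^ 2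
  set ψ := theta ℤ fun k : ℕ ↦ tri k
  have hsq : FiniteFibers fun k : ℕ ↦ (k + 1) ^ 2 := .of_le fun k ↦ by nlinarith
  have hG := signedPed_mul_theta_square
  obtain ⟨Z, hZ⟩ := theta_sq_eq ℤ hsq
  rw [theta_square] at hG
  have h0 : coeff (225 * n + 43) ψ = 0 := coeff_theta_eq_zero fun k hk ↦ by
    have h := two_mul_tri k
    rw [hk] at h
    push_cast at h
    have h9 := congrArg (Int.cast : ℤ → ZMod 9)
      (show (2 * k + 1 : ℤ) ^ 2 = 9 * (200 * n + 38) + 3 by linarith)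
    push_cast at h9
    rw [show (9 : ZMod 9) = 0 by decide, zero_mul, zero_add] at h9
    generalize (2 * (k : ZMod 9) + 1) = x at h9
    revert x; decide
  have h1 : coeff (225 * n + 43) (ψ * Y) = 0 := by
    rw [theta_mul finiteFibers_tri_nat hsq]
    refine coeff_theta_eq_zero fun ⟨k, a⟩ hk ↦ ?_
    zify at hk
    have h := two_mul_tri k
    have h25 := congrArg (Int.cast : ℤ → ZMod 25)
      (show (2 * k + 1 : ℤ) ^ 2 + 8 * (a + 1) ^ 2 = 25 * (72 * n + 13) + 20 by linarith)
    push_cast at h25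
    rw [show (25 : ZMod 25) = 0 by decide, zero_mul, zero_add] at h25
    generalize (2 * (k : ZMod 25) + 1) = x at h25
    generalize ((a : ZMod 25) + 1) = y at h25
    revert x y; decide
  have h2 : coeff (225 * n + 43) (ψ * Y.expand 2 two_ne_zero) = 0 := by
    rw [expand_theta, theta_mul finiteFibers_tri_nat (hsq.const_mul two_ne_zero)]
    refine coeff_theta_eq_zero fun ⟨k, a⟩ hk ↦ ?_
    zify at hk
    have h := two_mul_tri k
    have h9 := congrArg (Int.cast : ℤ → ZMod 9)
      (show (2 * k + 1 : ℤ) ^ 2 + 16 * (a + 1) ^ 2 = 9 * (200 * n + 38) + 3 by linarith)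
    push_cast at h9
    rw [show (9 : ZMod 9) = 0 by decide, zero_mul, zero_add] at h9
    generalize (2 * (k : ZMod 9) + 1) = x at h9
    generalize ((a : ZMod 9) + 1) = y at h9
    revert x y; decide
  have hS : signedPed = ψ - C 2 * (ψ * Y) + C 4 * (ψ * Y.expand 2 two_ne_zero) +
      C 8 * (ψ * Z - Y ^ 3 * signedPed) := by
    simp only [map_ofNat]
    linear_combination (1 - 2 * Y + 4 * Y ^ 2) * hG + 4 * ψ * hZ
  have hc := congrArg (coeff (225 * n + 43)) hS
  simp only [map_add, map_sub, coeff_C_mul, h0, h1, h2] at hc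
  rw [signedPed, coeff_mk] at hc
  have h8 : (8 : ℤ) ∣ (-1) ^ (225 * n + 43) * (ped (225 * n + 43) : ℤ) := by
    rw [hc]; simp
  rw [(IsUnit.pow _ isUnit_one.neg).dvd_mul_left] at h8
  exact_mod_cast h8

theorem ped_225n_add_43 (n : ℕ) : ped (225 * n + 43) ≡ 0 [MOD 24] := by
  rw [Nat.modEq_zero_iff_dvd]
  have h3 := three_dvd_ped (25 * n + 4)
  rw [show 9 * (25 * n + 4) + 7 = 225 * n + 43 by ring] at h3
  exact Nat.Coprime.mul_dvd_of_dvd_of_dvd (m := 3) (n := 8) (by norm_num) h3 (eight_dvd_ped n)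
end

section
/- For every nonnegative integer n, ped(225n + 88) ≡ 0 (mod 24). -/
open PowerSeries
open scoped PowerSeries.WithPiTopology

/-- `f = ∑ i, c i * X ^ e i`, where only finitely many `i` share a given exponent. -/
structure IsTheta {ι : Type*} (f : ℤ⟦X⟧) (e : ι → ℕ) (c : ι → ℤ) : Prop where
  finite_fiber : ∀ n, {i | e i = n}.Finite
  hasSum : HasSum (fun i ↦ monomial (e i) (c i)) f

/-- The series `∑ i, c i * X ^ e i`. -/
noncomputable def thetaSeries {ι : Type*} (e : ι → ℕ) (c : ι → ℤ) : ℤ⟦X⟧ :=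
  ∑' i, monomial (e i) (c i)

theorem summable_monomial {ι : Type*} {e : ι → ℕ} (h : ∀ n, {i | e i = n}.Finite) (c : ι → ℤ) :
    Summable fun i ↦ (monomial (e i) (c i) : ℤ⟦X⟧) := by
  rw [WithPiTopology.summable_iff_summable_coeff]
  refine fun d ↦ summable_of_hasFiniteSupport ((h d).subset fun i hi ↦ ?_)
  simp only [Function.mem_support, coeff_monomial] at hi
  grind

theorem isTheta_thetaSeries {ι : Type*} {e : ι → ℕ} (h : ∀ n, {i | e i = n}.Finite) (c : ι → ℤ) :
    IsTheta (thetaSeries e c) e c :=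
  ⟨h, (summable_monomial h c).hasSum⟩

theorem finite_fiber_of_abs_le {e : ℤ → ℕ} (h : ∀ i, |i| ≤ e i + 1) (n : ℕ) :
    {i | e i = n}.Finite := by
  refine (Set.finite_Icc (-(n + 1) : ℤ) (n + 1)).subset fun i hi ↦ ?_
  have := h i
  rw [Set.mem_ofPred_eq] at hi
  rw [hi] at this
  exact abs_le.mp this

namespace IsTheta

variable {ι κ τ : Type*} {f g : ℤ⟦X⟧} {e : ι → ℕ} {c : ι → ℤ} {e' : κ → ℕ} {c' : κ → ℤ}

theorem unique (hf : IsTheta f e c) (hg : IsTheta g e c) : f = g :=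
  hf.hasSum.unique hg.hasSum

theorem eq_of_eq {c₁ : ι → ℤ} {e₁ : ι → ℕ} (hf : IsTheta f e c) (hg : IsTheta g e₁ c₁)
    (he : ∀ i, e i = e₁ i) (hc : ∀ i, c i = c₁ i) : f = g := by
  obtain rfl : e = e₁ := funext he
  obtain rfl : c = c₁ := funext hc
  exact hf.unique hg

theorem comp_injective (hf : IsTheta f e c) {φ : κ → ι} (hφ : φ.Injective)
    (h : ∀ i ∉ Set.range φ, c i = 0) : IsTheta f (e ∘ φ) (c ∘ φ) where
  finite_fiber n := (hf.finite_fiber n).preimage hφ.injOn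
  hasSum := (hφ.hasSum_iff fun i hi ↦ by simp [h i hi]).mpr hf.hasSum

theorem comp_bijective (hf : IsTheta f e c) {φ : κ → ι} (hφ : φ.Bijective) :
    IsTheta f (e ∘ φ) (c ∘ φ) :=
  hf.comp_injective hφ.1 fun i hi ↦ absurd (hφ.2 i) hi

theorem eq_of_injective (hf : IsTheta f e c) (hg : IsTheta g e' c') (φ : κ → ι)
    (hφ : φ.Injective) (h : ∀ i ∉ Set.range φ, c i = 0) (he : ∀ j, e (φ j) = e' j)
    (hc : ∀ j, c (φ j) = c' j) : f = g :=
  (hf.comp_injective hφ h).eq_of_eq hg he hc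

theorem eq_of_bijective (hf : IsTheta f e c) (hg : IsTheta g e' c') (φ : κ → ι)
    (hφ : φ.Bijective) (he : ∀ j, e (φ j) = e' j) (hc : ∀ j, c (φ j) = c' j) : f = g :=
  (hf.comp_bijective hφ).eq_of_eq hg he hc

theorem add (hf : IsTheta f e c) {c₁ : ι → ℤ} (hg : IsTheta g e c₁) :
    IsTheta (f + g) e (fun i ↦ c i + c₁ i) where
  finite_fiber := hf.finite_fiber
  hasSum := by simpa using hf.hasSum.add hg.hasSum

theorem intCast_mul (a : ℤ) (hf : IsTheta f e c) : IsTheta (a * f) e (fun i ↦ a * c i) where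
  finite_fiber := hf.finite_fiber
  hasSum := by
    have h (i : ι) : (monomial (e i) (a * c i) : ℤ⟦X⟧) = a * monomial (e i) (c i) := by
      rw [← zsmul_eq_mul, ← map_zsmul, smul_eq_mul]
    simpa [h] using hf.hasSum.mul_left (a : ℤ⟦X⟧)

theorem two_mul (hf : IsTheta f e c) : IsTheta (2 * f) e (fun i ↦ 2 * c i) := by
  simpa using hf.intCast_mul 2

theorem sumElim (hf : IsTheta f e c) (hg : IsTheta g e' c') :
    IsTheta (f + g) (Sum.elim e e') (Sum.elim c c') where
  finite_fiber n := by
    refine (((hf.finite_fiber n).image Sum.inl).union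
      ((hg.finite_fiber n).image Sum.inr)).subset ?_
    rintro (i | i) hi <;> simpa using hi
  hasSum := HasSum.sum (by exact hf.hasSum) (by exact hg.hasSum)

theorem mul (hf : IsTheta f e c) (hg : IsTheta g e' c') :
    IsTheta (f * g) (fun p : ι × κ ↦ e p.1 + e' p.2) (fun p ↦ c p.1 * c' p.2) := by
  have hfin (n : ℕ) : {p : ι × κ | e p.1 + e' p.2 = n}.Finite := by
    refine Set.Finite.subset (((Set.finite_Iic n).biUnion fun m _ ↦ hf.finite_fiber m).prod
      ((Set.finite_Iic n).biUnion fun m _ ↦ hg.finite_fiber m)) ?_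
    rintro ⟨i, j⟩ h
    simp only [Set.mem_ofPred_eq] at h
    simp only [Set.mem_Iic, Set.mem_prod, Set.mem_iUnion, Set.mem_ofPred_eq, exists_prop]
    exact ⟨⟨_, by omega, rfl⟩, _, by omega, rfl⟩
  refine ⟨hfin, ?_⟩
  have h := hf.hasSum.mul hg.hasSum
    (by simpa [monomial_mul_monomial] using summable_monomial hfin fun p ↦ c p.1 * c' p.2)
  simpa [monomial_mul_monomial] using h

theorem map {G : Type*} [FunLike G ℤ⟦X⟧ ℤ⟦X⟧] [AddMonoidHomClass G ℤ⟦X⟧ ℤ⟦X⟧]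
    (hf : IsTheta f e c) {F : G} (hF : Continuous F) {e₁ : ι → ℕ} {c₁ : ι → ℤ}
    (h : ∀ i, F (monomial (e i) (c i)) = monomial (e₁ i) (c₁ i))
    (hfin : ∀ n, {i | e₁ i = n}.Finite) : IsTheta (F f) e₁ c₁ where
  finite_fiber := hfin
  hasSum := by simpa [Function.comp_def, h] using hf.hasSum.map F hF

theorem X_pow_mul (k : ℕ) (hf : IsTheta f e c) : IsTheta (X ^ k * f) (fun i ↦ k + e i) c where
  finite_fiber n := (hf.finite_fiber (n - k)).subset fun i hi ↦ by
    simp only [Set.mem_ofPred_eq] at hi ⊢; omega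
  hasSum := by
    simpa [X_pow_eq, monomial_mul_monomial] using hf.hasSum.mul_left (X ^ k)

end IsTheta

theorem continuous_expand (k : ℕ) (hk : k ≠ 0) :
    Continuous (expand k hk : ℤ⟦X⟧ → ℤ⟦X⟧) := by
  rw [continuous_iff_continuousAt]
  intro f
  rw [ContinuousAt, WithPiTopology.tendsto_iff_coeff_tendsto]
  intro d
  simp only [coeff_expand]
  split_ifs
  · exact (WithPiTopology.continuous_coeff ℤ _).continuousAt
  · exact tendsto_const_nhds

theorem coeff_evalNegHom (f : ℤ⟦X⟧) (n : ℕ) :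
    coeff n (evalNegHom f) = (-1) ^ n * coeff n f := by
  simp [evalNegHom, coeff_rescale]

theorem continuous_evalNegHom : Continuous (evalNegHom : ℤ⟦X⟧ → ℤ⟦X⟧) := by
  rw [continuous_iff_continuousAt]
  intro f
  rw [ContinuousAt, WithPiTopology.tendsto_iff_coeff_tendsto]
  intro d
  simp only [coeff_evalNegHom]
  exact ((WithPiTopology.continuous_coeff ℤ d).const_mul _).continuousAt

theorem IsTheta.expand {ι : Type*} {f : ℤ⟦X⟧} {e : ι → ℕ} {c : ι → ℤ} (k : ℕ) (hk : k ≠ 0)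
    (hf : IsTheta f e c) : IsTheta (f.expand k hk) (fun i ↦ k * e i) c := by
  refine hf.map (continuous_expand k hk)
    (fun i ↦ by simp) fun n ↦ ?_
  refine (hf.finite_fiber (n / k)).subset fun i hi ↦ ?_
  simp only [Set.mem_ofPred_eq] at hi ⊢
  rw [← hi, Nat.mul_div_cancel_left _ (Nat.pos_of_ne_zero hk)]

theorem IsTheta.evalNeg {ι : Type*} {f : ℤ⟦X⟧} {e : ι → ℕ} {c : ι → ℤ} (hf : IsTheta f e c) :
    IsTheta (evalNegHom f) e (fun i ↦ (e i : ℤ).negOnePow * c i) := by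
  refine hf.map continuous_evalNegHom (fun i ↦ ?_) hf.finite_fiber
  ext n
  rw [coeff_evalNegHom, coeff_monomial, coeff_monomial]
  split_ifs with h <;> simp [h, Int.negOnePow_def]

theorem IsTheta.coeff_eq_zero {ι : Type*} {f : ℤ⟦X⟧} {e : ι → ℕ} {c : ι → ℤ} (hf : IsTheta f e c)
    {n : ℕ} (h : ∀ i, e i ≠ n) : coeff n f = 0 := by
  have := (WithPiTopology.hasSum_iff_hasSum_coeff ℤ).mp hf.hasSum n
  simp only [coeff_monomial] at this
  refine this.unique ?_
  convert hasSum_zero with i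
  exact if_neg (h i).symm

def triExp (j : ℤ) : ℕ := (j * (2 * j + 1)).toNat

theorem natCast_triExp (j : ℤ) : (triExp j : ℤ) = j * (2 * j + 1) :=
  Int.toNat_of_nonneg (by rcases le_or_gt 0 j with h | h <;> nlinarith)

def sqExp (n : ℤ) : ℕ := (n * n).toNat

theorem natCast_sqExp (n : ℤ) : (sqExp n : ℤ) = n * n :=
  Int.toNat_of_nonneg (mul_self_nonneg n)

def octExp (m : ℤ) : ℕ := (m * (3 * m + 2)).toNat

theorem natCast_octExp (m : ℤ) : (octExp m : ℤ) = m * (3 * m + 2) :=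
  Int.toNat_of_nonneg (by rcases le_or_gt 0 m with h | h <;> nlinarith)

/-- Ramanujan's `φ(q) = ∑ q ^ (n ^ 2)`, summed over all integers `n`. -/
noncomputable def ramPhi : ℤ⟦X⟧ := thetaSeries sqExp fun _ ↦ 1

/-- Ramanujan's `ψ(q) = ∑ q ^ (k * (k + 1) / 2)`, summed over `k ≥ 0`; the exponents are
`j * (2 * j + 1)` for `j` an integer. -/
noncomputable def ramPsi : ℤ⟦X⟧ := thetaSeries triExp fun _ ↦ 1

/-- The series `∑ q ^ (m * (3 * m + 2))` over all integers `m`. -/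
noncomputable def octSeries : ℤ⟦X⟧ := thetaSeries octExp fun _ ↦ 1

/-- The series `∑ q ^ (k * (3 * k - 1) / 2)` over all integers `k`. -/
noncomputable def pentSeries : ℤ⟦X⟧ := thetaSeries pentagonal fun _ ↦ 1

theorem isTheta_ramPhi : IsTheta ramPhi sqExp fun _ ↦ 1 :=
  isTheta_thetaSeries (finite_fiber_of_abs_le fun i ↦ by
    rw [natCast_sqExp, abs_le]; constructor <;> nlinarith) _

theorem isTheta_ramPsi : IsTheta ramPsi triExp fun _ ↦ 1 :=
  isTheta_thetaSeries (finite_fiber_of_abs_le fun i ↦ by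
    rw [natCast_triExp, abs_le]
    rcases le_or_gt 0 i with h | h <;> constructor <;> nlinarith) _

theorem isTheta_octSeries : IsTheta octSeries octExp fun _ ↦ 1 :=
  isTheta_thetaSeries (finite_fiber_of_abs_le fun i ↦ by
    rw [natCast_octExp, abs_le]
    rcases le_or_gt 0 i with h | h <;> constructor <;> nlinarith) _

theorem finite_fiber_pentagonal (n : ℕ) : {i | pentagonal i = n}.Finite :=
  Set.Subsingleton.finite fun _ hi _ hj ↦ pentagonal_injective (hi.trans hj.symm)

theorem isTheta_pentSeries : IsTheta pentSeries pentagonal fun _ ↦ 1 :=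
  isTheta_thetaSeries finite_fiber_pentagonal _

theorem isTheta_pentagonalSeries :
    IsTheta (pentagonalSeries ℤ) pentagonal fun k ↦ (k.negOnePow : ℤ) where
  finite_fiber := finite_fiber_pentagonal
  hasSum := by
    convert WithPiTopology.hasSum_pentagonalSeries ℤ using 2 with k
    ext n
    rw [coeff_monomial]
    rcases Int.even_or_odd k with h | h <;>
      simp [Int.negOnePow_even, Int.negOnePow_odd, h, coeff_X_pow, apply_ite]

/-- The index `j` with `j * (2 * j + 1) = b * (b + 1) / 2`. -/
def triRoot (b : ℤ) : ℤ := if b % 2 = 0 then b / 2 else -((b + 1) / 2)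

theorem two_mul_natCast_triExp_triRoot (b : ℤ) : 2 * (triExp (triRoot b) : ℤ) = b * (b + 1) := by
  rw [natCast_triExp, triRoot]
  split_ifs with h
  · obtain ⟨m, rfl⟩ : ∃ m, b = 2 * m := ⟨b / 2, by omega⟩
    rw [Int.mul_ediv_cancel_left _ (by simp)]
    ring
  · obtain ⟨m, rfl⟩ : ∃ m, b = 2 * m - 1 := ⟨(b + 1) / 2, by omega⟩
    rw [sub_add_cancel, Int.mul_ediv_cancel_left _ (by simp)]
    ring

theorem isTheta_two_mul_ramPsi : IsTheta (2 * ramPsi) (triExp ∘ triRoot) fun _ ↦ 1 := by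
  have h := isTheta_ramPsi.sumElim isTheta_ramPsi
  rw [← two_mul] at h
  convert h.comp_bijective
    (φ := fun b : ℤ ↦ if b % 2 = 0 then .inl (triRoot b) else .inr (triRoot b)) ⟨?_, ?_⟩ using 1
  · ext b
    dsimp only [Function.comp_apply]
    split_ifs <;> rfl
  · ext b
    dsimp only [Function.comp_apply]
    split_ifs <;> rfl
  · intro a b hab
    simp only [triRoot] at hab
    split_ifs at hab <;> simp at hab <;> omega
  · rintro (j | j)
    · exact ⟨2 * j, by simp [triRoot]⟩
    · refine ⟨-2 * j - 1, ?_⟩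
      have : (-2 * j - 1) % 2 ≠ 0 := by omega
      simp only [triRoot, this, if_false]
      congr 1
      omega

theorem ramPhi_three_dissection :
    ramPhi = ramPhi.expand 9 (by simp) + 2 * X * octSeries.expand 3 (by simp) := by
  have h := (isTheta_ramPhi.expand 9 (by simp)).sumElim
    (((isTheta_octSeries.expand 3 (by simp)).X_pow_mul 1).sumElim
    ((isTheta_octSeries.expand 3 (by simp)).X_pow_mul 1))
  refine (isTheta_ramPhi.eq_of_bijective h
    (Sum.elim (fun n ↦ 3 * n) (Sum.elim (fun m ↦ 3 * m + 1) fun m ↦ -(3 * m + 1))) ⟨?_, ?_⟩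
    ?_ ?_).trans (by ring)
  · rintro (a | a | a) (b | b | b) hab <;> simp at hab ⊢ <;> omega
  · intro n
    obtain ⟨k, hk | hk | hk⟩ : ∃ k, n = 3 * k ∨ n = 3 * k + 1 ∨ n = -(3 * k + 1) := by
      by_cases h0 : n % 3 = 2
      · exact ⟨-(n + 1) / 3, by omega⟩
      · exact ⟨n / 3, by omega⟩
    · exact ⟨.inl k, by simp [hk]⟩
    · exact ⟨.inr (.inl k), by simp [hk]⟩
    · exact ⟨.inr (.inr k), by simp [hk]⟩
  · rintro (a | a | a) <;> simp <;> zify <;> simp [natCast_sqExp, natCast_octExp] <;> ring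
  · rintro (a | a | a) <;> rfl

theorem ramPsi_three_dissection :
    ramPsi = pentSeries.expand 3 (by simp) + X * ramPsi.expand 9 (by simp) := by
  have h := (isTheta_pentSeries.expand 3 (by simp)).sumElim
    ((isTheta_ramPsi.expand 9 (by simp)).X_pow_mul 1)
  rw [pow_one] at h
  refine isTheta_ramPsi.eq_of_bijective h
    (Sum.elim (fun k ↦ triRoot (3 * k - 1)) fun k ↦ -3 * k - 1) ⟨?_, ?_⟩ ?_ ?_
  · rintro (a | a) (b | b) hab <;> simp [triRoot] at hab ⊢ <;> (try split_ifs at hab) <;> omega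
  · intro n
    by_cases h2 : n % 3 = 2
    · exact ⟨.inr (-(n + 1) / 3), by simp; omega⟩
    by_cases h0 : n % 3 = 0
    · exact ⟨.inl (-2 * (n / 3)), by simp [triRoot]; omega⟩
    · exact ⟨.inl (2 * (n / 3) + 1), by simp [triRoot]; omega⟩
  · rintro (k | k)
    · have h₁ := two_mul_natCast_pentagonal k
      have h₂ := two_mul_natCast_triExp_triRoot (3 * k - 1)
      simp only [Sum.elim_inl]
      zify
      linarith
    · simp only [Sum.elim_inr]
      zify
      rw [natCast_triExp, natCast_triExp]
      ring
  · rintro (k | k) <;> rfl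

theorem ramPsi_sq : ramPsi ^ 2 = ramPhi * ramPsi.expand 2 (by simp) := by
  rw [sq]
  refine ((isTheta_ramPhi.mul (isTheta_ramPsi.expand 2 (by simp))).eq_of_bijective
    (isTheta_ramPsi.mul isTheta_ramPsi) (fun p ↦ (p.1 - p.2, triRoot (p.1 + p.2)))
    ⟨?_, ?_⟩ ?_ fun _ ↦ rfl).symm
  · rintro ⟨a, b⟩ ⟨a', b'⟩ h
    simp only [triRoot, Prod.mk.injEq] at h ⊢
    split_ifs at h <;> omega
  · rintro ⟨n, i⟩
    by_cases h : n % 2 = 0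
    · exact ⟨((n + 2 * i) / 2, (2 * i - n) / 2), by simp [triRoot]; omega⟩
    · exact ⟨((n - 2 * i - 1) / 2, (-2 * i - 1 - n) / 2), by simp [triRoot]; omega⟩
  · rintro ⟨a, b⟩
    have h := two_mul_natCast_triExp_triRoot (a + b)
    zify
    simp only [natCast_sqExp, natCast_triExp] at h ⊢
    linarith

theorem two_powerSeries_ne_zero : (2 : ℤ⟦X⟧) ≠ 0 := fun h ↦ by
  simpa [map_ofNat] using congrArg (constantCoeff (R := ℤ)) h

theorem isTheta_evalNegHom_ramPhi :
    IsTheta (evalNegHom ramPhi) sqExp fun n ↦ (n.negOnePow : ℤ) := by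
  convert isTheta_ramPhi.evalNeg using 2 with n
  rw [mul_one, natCast_sqExp, Units.val_inj, Int.negOnePow_eq_iff]
  simp [Int.even_sub, Int.even_mul]

theorem ramPhi_mul_evalNegHom :
    ramPhi * evalNegHom ramPhi = (evalNegHom ramPhi).expand 2 (by simp) ^ 2 := by
  have h₁ := isTheta_ramPhi.mul isTheta_evalNegHom_ramPhi
  have h₂ := h₁.comp_bijective (φ := Prod.swap) Prod.swap_bijective
  have h₃ := (isTheta_evalNegHom_ramPhi.expand 2 (by simp)).mul
    (isTheta_evalNegHom_ramPhi.expand 2 (by simp))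
  have h₄ := h₁.add (c₁ := fun p ↦ 1 * (p.1.negOnePow : ℤ)) (by
    convert h₂ using 1
    · ext p
      simp [add_comm]
    · rfl)
  rw [← two_mul] at h₄
  refine mul_left_cancel₀ two_powerSeries_ne_zero ((h₄.eq_of_injective (h₃.two_mul)
    (fun p ↦ (p.1 + p.2, p.1 - p.2)) ?_ ?_ ?_ ?_).trans (by rw [sq]))
  · rintro ⟨a, b⟩ ⟨a', b'⟩ h
    simp only [Prod.mk.injEq] at h ⊢
    omega
  · rintro ⟨x, y⟩ h
    have : ¬ Even (x - y) := fun ⟨b, hb⟩ ↦ h ⟨(x - b, b), by simp; omega⟩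
    have h' : x.negOnePow = -y.negOnePow := by
      rw [← Int.negOnePow_succ, Int.negOnePow_eq_iff]
      grind
    simp [h']
  · rintro ⟨a, b⟩
    zify
    simp only [natCast_sqExp]
    ring
  · rintro ⟨a, b⟩
    simp [Int.negOnePow_add, Int.negOnePow_sub]
    ring

theorem pentSeries_mul_octSeries :
    pentSeries * octSeries = 2 * ramPsi * ramPsi.expand 2 (by simp) -
      ramPsi.expand 3 (by simp) * ramPhi.expand 3 (by simp) := by
  have h := (isTheta_pentSeries.mul isTheta_octSeries).sumElim
    ((isTheta_ramPsi.expand 3 (by simp)).mul (isTheta_ramPhi.expand 3 (by simp)))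
  have h' := isTheta_ramPsi.mul (isTheta_two_mul_ramPsi.expand 2 (by simp))
  rw [map_mul, map_ofNat] at h'
  rw [eq_sub_iff_add_eq]
  refine ((h'.eq_of_bijective h (Sum.elim (fun p ↦ if p.1 % 2 = 0 then
    (p.1 / 2 + p.2, p.2 - p.1) else (-((p.1 + 1) / 2) - p.2, p.1 - p.2 - 1))
    fun p ↦ (p.1 + p.2, p.2 - 2 * p.1 - 1)) ⟨?_, ?_⟩ ?_ ?_).symm).trans (by ring)
  · rintro (⟨a, b⟩ | ⟨a, b⟩) (⟨a', b'⟩ | ⟨a', b'⟩) h <;>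
      simp only [Sum.elim_inl, Sum.elim_inr, Sum.inl.injEq, Sum.inr.injEq, Prod.mk.injEq,
        reduceCtorEq] at h ⊢ <;>
      (try split_ifs at h) <;> (try simp only [Prod.mk.injEq] at h) <;> omega
  · rintro ⟨l, b⟩
    obtain h | h | h : (l - b) % 3 = 1 ∨ (l - b) % 3 = 0 ∨ (l - b) % 3 = 2 := by omega
    · exact ⟨.inr (l - (2 * l + b + 1) / 3, (2 * l + b + 1) / 3), by simp; omega⟩
    · refine ⟨.inl (2 * ((l - b) / 3), (2 * l + b) / 3), ?_⟩
      simp only [Sum.elim_inl]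
      split_ifs <;> simp only [Prod.mk.injEq] <;> omega
    · refine ⟨.inl ((2 * b - 2 * l + 1) / 3, -((2 * l + b + 2) / 3)), ?_⟩
      simp only [Sum.elim_inl]
      split_ifs <;> simp only [Prod.mk.injEq] <;> omega
  · rintro (⟨a, b⟩ | ⟨a, b⟩)
    · have h₁ := two_mul_natCast_pentagonal a
      simp only [Sum.elim_inl, Function.comp_apply]
      zify
      split_ifs with ha
      · have h₂ := two_mul_natCast_triExp_triRoot (b - a)
        obtain ⟨m, rfl⟩ : ∃ m, a = 2 * m := ⟨a / 2, by omega⟩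
        rw [Int.mul_ediv_cancel_left _ (by simp), natCast_triExp, natCast_octExp]
        linarith
      · have h₂ := two_mul_natCast_triExp_triRoot (a - b - 1)
        obtain ⟨m, rfl⟩ : ∃ m, a = 2 * m - 1 := ⟨(a + 1) / 2, by omega⟩
        rw [sub_add_cancel, Int.mul_ediv_cancel_left _ (by simp), natCast_triExp, natCast_octExp]
        linarith
    · have h₂ := two_mul_natCast_triExp_triRoot (b - 2 * a - 1)
      simp only [Sum.elim_inr, Function.comp_apply]
      zify
      rw [natCast_triExp (a + b), natCast_triExp a, natCast_sqExp]
      linarith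
  · rintro (p | p) <;> rfl

theorem pentagonalSeries_mul_expand :
    pentagonalSeries ℤ * (pentagonalSeries ℤ).expand 2 (by simp) = evalNegHom ramPhi * ramPsi := by
  have hR := isTheta_evalNegHom_ramPhi.mul isTheta_ramPsi
  set e : ℤ × ℤ → ℕ := fun p ↦ sqExp p.1 + triExp p.2 with he
  have h₁ := isTheta_thetaSeries hR.finite_fiber
    fun p ↦ if (p.1 + p.2 + 1) % 3 = 0 then 0 else (p.1.negOnePow : ℤ)
  have h₂ := isTheta_thetaSeries hR.finite_fiber
    fun p ↦ if (p.1 + p.2 + 1) % 3 = 0 then (p.1.negOnePow : ℤ) else 0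
  have h₁₂ := (h₁.add h₂).eq_of_eq hR (fun _ ↦ rfl) (fun p ↦ by split_ifs <;> simp)
  have hP := isTheta_pentagonalSeries.mul (isTheta_pentagonalSeries.expand 2 (by simp))
  rw [← h₁₂]
  set σ : ℤ × ℤ → ℤ × ℤ := fun p ↦ if (p.1 + p.2 + 1) % 3 = 0 then
    ((4 * p.2 + 1 + p.1) / 3, (2 * p.1 - p.2 - 1) / 3) else p with hσ
  have hσσ : σ.Involutive := by
    rintro ⟨n, l⟩
    simp only [hσ]
    split_ifs <;> simp only [Prod.mk.injEq] at * <;> omega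
  have h₀ : thetaSeries e (fun p ↦ if (p.1 + p.2 + 1) % 3 = 0 then (p.1.negOnePow : ℤ) else 0)
      = 0 := by
    refine (mul_eq_zero.mp ((two_mul _).trans (eq_neg_iff_add_eq_zero.mp ?_))).resolve_left
      two_powerSeries_ne_zero
    have h₃ := h₂.intCast_mul (-1)
    simp only [Int.cast_neg, Int.cast_one, neg_one_mul] at h₃
    refine h₂.eq_of_bijective h₃ σ hσσ.bijective ?_ ?_
    · rintro ⟨n, l⟩
      simp only [hσ, he]
      split_ifs with h
      · obtain ⟨m, rfl⟩ : ∃ m, n = 3 * m - l - 1 := ⟨(n + l + 1) / 3, by omega⟩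
        rw [show (4 * l + 1 + (3 * m - l - 1)) / 3 = l + m by omega,
          show (2 * (3 * m - l - 1) - l - 1) / 3 = 2 * m - l - 1 by omega]
        zify
        simp only [natCast_sqExp, natCast_triExp]
        ring
      · rfl
    · rintro ⟨n, l⟩
      simp only [hσ]
      by_cases h : (n + l + 1) % 3 = 0
      · have h' : ((4 * l + 1 + n) / 3 + (2 * n - l - 1) / 3 + 1) % 3 = 0 := by omega
        have : ((4 * l + 1 + n) / 3).negOnePow = - n.negOnePow := by
          rw [← Int.negOnePow_succ, Int.negOnePow_eq_iff, Int.even_iff]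
          omega
        rw [if_pos h, if_pos h, if_pos h', this]
        simp
      · simp only [h, if_false]
        simp
  rw [h₀, add_zero]
  refine (h₁.eq_of_injective hP (fun p ↦ if p.1 % 2 = 0 then
      (p.2 - p.1, triRoot (p.1 + 2 * p.2 - 1))
    else (p.1 - p.2, triRoot (p.1 + 2 * p.2 - 1))) ?_ ?_ ?_ ?_).symm
  · rintro ⟨a, b⟩ ⟨a', b'⟩ h
    simp only [triRoot] at h
    split_ifs at h <;> simp only [Prod.mk.injEq] at h ⊢ <;> omega
  · rintro ⟨n, l⟩ h
    simp only
    rw [if_pos]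
    by_contra h0
    apply h
    by_cases hs : (n + l + 1) % 3 = 2
    · refine ⟨((4 * l + 4 * n + 2) / 6, (4 * l + 2 - 2 * n) / 6), ?_⟩
      simp only [triRoot]
      split_ifs <;> simp only [Prod.mk.injEq] <;> omega
    · refine ⟨(-(4 * l + 4 * n) / 6, -(4 * l - 2 * n) / 6), ?_⟩
      simp only [triRoot]
      split_ifs <;> simp only [Prod.mk.injEq] <;> omega
  · rintro ⟨a, b⟩
    have h₁ := two_mul_natCast_pentagonal a
    have h₂ := two_mul_natCast_pentagonal b
    have h₃ := two_mul_natCast_triExp_triRoot (a + 2 * b - 1)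
    simp only [he]
    split_ifs <;> zify <;> rw [natCast_sqExp] <;> linarith
  · rintro ⟨a, b⟩
    have : (a - b).negOnePow = a.negOnePow * b.negOnePow := Int.negOnePow_sub a b
    have : (b - a).negOnePow = a.negOnePow * b.negOnePow := by
      rw [Int.negOnePow_sub, mul_comm]
    dsimp only
    split_ifs with h₁ h₂ h₂ <;> first
      | (simp [*]; done)
      | (simp only [triRoot] at h₂; split_ifs at h₂ <;> omega)

theorem hasProd_expand_pentagonalSeries (k : ℕ) (hk : k ≠ 0) :
    HasProd (fun n ↦ 1 - X ^ (k * (n + 1))) ((pentagonalSeries ℤ).expand k hk) := by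
  convert (WithPiTopology.hasProd_one_sub_X_pow ℤ).map (expand k hk) (continuous_expand k hk)
    using 2 with n
  simp [pow_mul]

theorem hasProd_evalNegHom_pentagonalSeries :
    HasProd (fun n ↦ 1 - (-X) ^ (n + 1)) (evalNegHom (pentagonalSeries ℤ)) := by
  convert (WithPiTopology.hasProd_one_sub_X_pow ℤ).map evalNegHom continuous_evalNegHom
    using 2 with n
  simp

theorem hasProd_ite_expand_pentagonalSeries (k : ℕ) (hk : k ≠ 0) :
    HasProd (fun n ↦ if Even (n + 1) then 1 - X ^ (k * (n + 1)) else 1)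
      ((pentagonalSeries ℤ).expand (2 * k) (by simpa using hk)) := by
  have hinj : Function.Injective fun n : ℕ ↦ 2 * n + 1 := fun a b h ↦ by simpa using h
  rw [← hinj.hasProd_iff fun n hn ↦ if_neg fun ⟨m, hm⟩ ↦ hn ⟨m - 1, by dsimp only; omega⟩]
  convert hasProd_expand_pentagonalSeries (2 * k) (by simpa using hk) using 2
  rename_i n
  simp only [Function.comp_apply]
  rw [if_pos ⟨n + 1, by ring⟩]
  ring

theorem pentagonalSeries_mul_evalNegHom :
    pentagonalSeries ℤ * evalNegHom (pentagonalSeries ℤ) *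
      (pentagonalSeries ℤ).expand 4 (by simp) = (pentagonalSeries ℤ).expand 2 (by simp) ^ 3 := by
  have h₁ := ((WithPiTopology.hasProd_one_sub_X_pow ℤ).mul
    hasProd_evalNegHom_pentagonalSeries).mul (hasProd_ite_expand_pentagonalSeries 2 (by simp))
  have h₂ := ((hasProd_expand_pentagonalSeries 2 (by simp)).mul
    (hasProd_ite_expand_pentagonalSeries 1 (by simp))).mul
    (hasProd_ite_expand_pentagonalSeries 1 (by simp))
  refine (h₁.unique ?_).trans (pow_three' _).symm
  convert h₂ using 2 with n
  by_cases h : Even (n + 1)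
  · simp only [if_pos h, h.neg_pow]
    ring
  · simp only [if_neg h, (Nat.not_even_iff_odd.mp h).neg_pow]
    ring

/-- The generating function of `ped`. -/
noncomputable def pedSeries : ℤ⟦X⟧ := mk fun n ↦ (ped n : ℤ)

theorem pedSeries_eq_genFun : pedSeries =
    Nat.Partition.genFun fun i c ↦ if Even i → c ≤ 1 then (1 : ℤ) else 0 := by
  ext n
  rw [pedSeries, coeff_mk, Nat.Partition.coeff_genFun, ped, Fintype.card_subtype,
    Finset.card_filter]
  simp_rw [Finsupp.prod, Finset.prod_boole]
  simp

theorem pedSeries_mul_pentagonalSeries :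
    pedSeries * pentagonalSeries ℤ = (pentagonalSeries ℤ).expand 4 (by simp) := by
  have h := (Nat.Partition.hasProd_genFun fun i c ↦ if Even i → c ≤ 1 then (1 : ℤ) else 0).mul
    (WithPiTopology.hasProd_one_sub_X_pow ℤ)
  simp only [← pedSeries_eq_genFun, smul_eq_C_mul] at h
  refine h.unique (Eq.subst (motive := fun F ↦ HasProd F _) (funext fun n ↦ ?_)
    (hasProd_ite_expand_pentagonalSeries 2 (by simp)))
  symm
  by_cases hn : Even (n + 1)
  · rw [if_pos hn, tsum_eq_single 0 fun j hj ↦ by simp [hn, hj]]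
    simp only [zero_add, le_refl, implies_true, if_true, mul_one, map_one, one_mul]
    ring
  · have h0 : constantCoeff ((X : ℤ⟦X⟧) ^ (n + 1)) = 0 := by simp
    have key := WithPiTopology.one_sub_mul_tsum_pow_of_constantCoeff_eq_zero h0
    rw [(WithPiTopology.summable_pow_of_constantCoeff_eq_zero h0).tsum_eq_zero_add, pow_zero] at key
    simp only [hn, false_imp_iff, if_true, if_false]
    rw [mul_comm, ← key]
    congr 2
    refine tsum_congr fun j ↦ ?_
    rw [map_one, one_mul, pow_mul]

theorem isTheta_one : IsTheta 1 (fun _ : Unit ↦ 0) fun _ ↦ 1 where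
  finite_fiber _ := Set.toFinite _
  hasSum := by
    simp [monomial_zero_eq_C]

theorem exists_ramPhi_eq : ∃ y : ℤ⟦X⟧, constantCoeff y = 0 ∧ ramPhi = 1 + 2 * y := by
  have hT : IsTheta _ (fun n : ℕ ↦ (n + 1) * (n + 1)) fun _ ↦ 1 :=
    isTheta_thetaSeries (fun n ↦ (Set.finite_Iic n).subset fun i hi ↦ by
      simp only [Set.mem_ofPred_eq, Set.mem_Iic] at hi ⊢
      nlinarith) _
  refine ⟨_, (coeff_zero_eq_constantCoeff_apply _).symm.trans
    (hT.coeff_eq_zero (n := 0) fun i ↦ by positivity), ?_⟩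
  refine (isTheta_ramPhi.eq_of_bijective (isTheta_one.sumElim (hT.sumElim hT))
    (Sum.elim (fun _ ↦ 0) (Sum.elim (fun n ↦ n + 1) fun n ↦ -(n + 1))) ⟨?_, ?_⟩ ?_ ?_).trans
    (by ring)
  · rintro (a | a | a) (b | b | b) hab <;> simp at hab ⊢ <;> omega
  · intro n
    obtain h | h | h := lt_trichotomy n 0
    · exact ⟨.inr (.inr (-n - 1).toNat), by simp; omega⟩
    · exact ⟨.inl (), by simp [h]⟩
    · exact ⟨.inr (.inl (n - 1).toNat), by simp; omega⟩
  · rintro (a | a | a) <;> zify <;> simp [natCast_sqExp]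
    ring
  · rintro (a | a | a) <;> rfl

theorem evalNegHom_evalNegHom (f : ℤ⟦X⟧) : evalNegHom (evalNegHom f) = f := by
  ext n
  rw [coeff_evalNegHom, coeff_evalNegHom, ← mul_assoc, ← mul_pow]
  simp

theorem evalNegHom_expand_two (f : ℤ⟦X⟧) :
    evalNegHom (f.expand 2 (by simp)) = f.expand 2 (by simp) := by
  ext n
  rw [coeff_evalNegHom, coeff_expand]
  split_ifs with h
  · rw [(even_iff_two_dvd.mpr h).neg_one_pow, one_mul]
  · rw [mul_zero]

theorem constantCoeff_evalNegHom (f : ℤ⟦X⟧) :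
    constantCoeff (evalNegHom f) = constantCoeff f := by
  simpa using coeff_evalNegHom f 0

theorem expand_injective {R : Type*} [CommRing R] (k : ℕ) (hk : k ≠ 0) :
    Function.Injective (expand k hk : R⟦X⟧ → R⟦X⟧) := fun f g h ↦ by
  ext n
  simpa using congrArg (coeff (k * n)) h

theorem constantCoeff_ramPhi : constantCoeff ramPhi = 1 := by
  obtain ⟨y, hy, h⟩ := exists_ramPhi_eq
  simp [h, hy]

theorem constantCoeff_pentagonalSeries : constantCoeff (pentagonalSeries ℤ) = 1 := by
  simpa [pentagonal] using coeff_pentagonalSeries_pentagonal ℤ 0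

theorem eq_of_pow_four_eq {a b : ℤ⟦X⟧} (ha : constantCoeff a = 1) (hb : constantCoeff b = 1)
    (h : a ^ 4 = b ^ 4) : a = b := by
  have h₁ : (a - b) * ((a + b) * (a ^ 2 + b ^ 2)) = 0 := by linear_combination h
  refine sub_eq_zero.mp ((mul_eq_zero.mp h₁).resolve_right fun h₂ ↦ ?_)
  simpa [ha, hb] using congrArg constantCoeff h₂

/-- Gauss's product formula for `φ(-q)`. -/
theorem pentagonalSeries_sq : pentagonalSeries ℤ ^ 2 =
    evalNegHom ramPhi * (pentagonalSeries ℤ).expand 2 (by simp) := by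
  have e₁ := pentagonalSeries_mul_expand
  have e₁' := congrArg evalNegHom e₁
  rw [map_mul, map_mul, evalNegHom_expand_two, evalNegHom_evalNegHom] at e₁'
  have e₂ := ramPhi_mul_evalNegHom
  have e₃ := ramPsi_sq
  have e₃' := congrArg evalNegHom e₃
  rw [map_pow, map_mul, evalNegHom_expand_two] at e₃'
  have e₄ := pentagonalSeries_mul_evalNegHom
  have e₅ : (pentagonalSeries ℤ ^ 5) ^ 2 =
      evalNegHom ramPhi ^ 6 * ramPsi ^ 2 * (pentagonalSeries ℤ).expand 2 (by simp) ^ 2 := by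
    apply expand_injective 2 (by simp)
    simp only [map_mul, map_pow, ← expand_mul, Nat.reduceMul]
    generalize pentagonalSeries ℤ = p at *
    generalize evalNegHom ramPhi = fm at *
    generalize p.expand 2 _ = p2 at *
    generalize p.expand 4 _ = p4 at *
    generalize ramPsi.expand 2 _ = s2 at *
    generalize fm.expand 2 _ = f2m at *
    generalize evalNegHom p = pm at *
    generalize evalNegHom ramPsi = sm at *
    calc (p2 ^ 5) ^ 2 = (p2 ^ 3) ^ 2 * p2 ^ 4 := by ring
      _ = ((p * p2) * (pm * p2)) ^ 2 * p4 ^ 2 := by rw [← e₄]; ring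
      _ = (ramPhi * fm) ^ 2 * (ramPsi ^ 2 * sm ^ 2) * p4 ^ 2 := by rw [e₁, e₁']; ring
      _ = (ramPhi * fm) ^ 3 * s2 ^ 2 * p4 ^ 2 := by rw [e₃, e₃']; ring
      _ = f2m ^ 6 * s2 ^ 2 * p4 ^ 2 := by rw [e₂]; ring
  have hp : pentagonalSeries ℤ ^ 2 ≠ 0 := fun h ↦ by
    simpa [constantCoeff_pentagonalSeries] using congrArg constantCoeff h
  refine eq_of_pow_four_eq (by simp [constantCoeff_pentagonalSeries])
    (by simp [constantCoeff_pentagonalSeries, constantCoeff_ramPhi, constantCoeff_evalNegHom])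
    (mul_left_cancel₀ hp ?_)
  linear_combination e₅ - evalNegHom ramPhi ^ 4 *
    (pentagonalSeries ℤ).expand 2 (by simp) ^ 2 * (evalNegHom ramPhi * ramPsi +
      pentagonalSeries ℤ * (pentagonalSeries ℤ).expand 2 (by simp)) * e₁

theorem evalNegHom_pedSeries_mul_ramPhi : evalNegHom pedSeries * ramPhi = ramPsi := by
  have e₁ := pentagonalSeries_mul_expand
  have e₄ := pentagonalSeries_mul_evalNegHom
  have e₅ := pentagonalSeries_sq
  have e₅' := congrArg evalNegHom e₅
  have e₆ := congrArg evalNegHom pedSeries_mul_pentagonalSeries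
  rw [show (pentagonalSeries ℤ).expand 4 (by simp) =
    ((pentagonalSeries ℤ).expand 2 (by simp)).expand 2 (by simp) by rw [← expand_mul],
    evalNegHom_expand_two, ← expand_mul, map_mul] at e₆
  rw [map_pow, map_mul, evalNegHom_expand_two, evalNegHom_evalNegHom] at e₅'
  have hp : pentagonalSeries ℤ ≠ 0 := fun h ↦ by
    simpa [constantCoeff_pentagonalSeries] using congrArg constantCoeff h
  have hp2 : (pentagonalSeries ℤ).expand 2 (by simp) ≠ 0 := fun h ↦ by
    simpa [constantCoeff_pentagonalSeries] using congrArg constantCoeff h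
  simp only [Nat.reduceMul] at *
  generalize pentagonalSeries ℤ = p at *
  generalize p.expand 2 _ = p2 at *
  generalize p.expand 4 _ = p4 at *
  generalize evalNegHom p = pm at *
  generalize evalNegHom ramPhi = fm at *
  generalize evalNegHom pedSeries = H at *
  have e₇ : p * ramPsi = p2 ^ 2 := mul_left_cancel₀ hp (by
    linear_combination ramPsi * e₅ - p2 * e₁)
  refine mul_left_cancel₀ hp (mul_left_cancel₀ hp2 ?_)
  linear_combination p * H * (-e₅') + p * pm * e₆ + e₄ - p2 * e₇

/-- The series whose `n`th coefficient is the `(3 * n + r)`th coefficient of the given one. -/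
noncomputable def trisect (r : ℕ) : ℤ⟦X⟧ →+ ℤ⟦X⟧ where
  toFun f := mk fun n ↦ coeff (3 * n + r) f
  map_zero' := by ext; simp
  map_add' f g := by ext; simp

theorem coeff_trisect (r n : ℕ) (f : ℤ⟦X⟧) : coeff n (trisect r f) = coeff (3 * n + r) f := by
  simp [trisect]

theorem coeff_X_pow_mul_expand_three_s1 {i : ℕ} (hi : i < 3) (f : ℤ⟦X⟧) (n : ℕ) :
    coeff n (X ^ i * f.expand 3 (by simp)) = if n % 3 = i then coeff (n / 3) f else 0 := by
  rw [coeff_X_pow_mul', coeff_expand, ← ite_and]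
  by_cases h : n % 3 = i
  · rw [if_pos (by omega), if_pos h, show (n - i) / 3 = n / 3 by omega]
  · rw [if_neg (by omega), if_neg h]

theorem trisect_X_pow_mul_expand {r i : ℕ} (hr : r < 3) (hi : i < 3) (f : ℤ⟦X⟧) :
    trisect r (X ^ i * f.expand 3 (by simp)) = if r = i then f else 0 := by
  ext n
  rw [coeff_trisect, coeff_X_pow_mul_expand_three_s1 hi, show (3 * n + r) % 3 = r by omega,
    show (3 * n + r) / 3 = n by omega]
  split_ifs <;> simp

theorem eq_sum_trisect (f : ℤ⟦X⟧) : f = (trisect 0 f).expand 3 (by simp) +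
    X * (trisect 1 f).expand 3 (by simp) + X ^ 2 * (trisect 2 f).expand 3 (by simp) := by
  ext n
  have h₀ := coeff_X_pow_mul_expand_three_s1 (i := 0) (by simp) (trisect 0 f) n
  have h₁ := coeff_X_pow_mul_expand_three_s1 (i := 1) (by simp) (trisect 1 f) n
  have h₂ := coeff_X_pow_mul_expand_three_s1 (i := 2) (by simp) (trisect 2 f) n
  rw [pow_zero, one_mul] at h₀
  rw [pow_one] at h₁
  rw [map_add, map_add, h₀, h₁, h₂, coeff_trisect, coeff_trisect, coeff_trisect]
  obtain h | h | h : n % 3 = 0 ∨ n % 3 = 1 ∨ n % 3 = 2 := by omega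
  all_goals
    simp only [h, if_true, if_false, zero_ne_one, one_ne_zero, OfNat.ofNat_ne_zero,
      OfNat.ofNat_ne_one, OfNat.zero_ne_ofNat, OfNat.one_ne_ofNat, add_zero, zero_add]
    congr 2
    omega

theorem trisect_dissection {r : ℕ} (hr : r < 3) (a b c : ℤ⟦X⟧) :
    trisect r (a.expand 3 (by simp) + X * b.expand 3 (by simp) + X ^ 2 * c.expand 3 (by simp)) =
      if r = 0 then a else if r = 1 then b else c := by
  have h₀ := trisect_X_pow_mul_expand hr (i := 0) (by simp) a
  have h₁ := trisect_X_pow_mul_expand hr (i := 1) (by simp) b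
  have h₂ := trisect_X_pow_mul_expand hr (i := 2) (by simp) c
  rw [pow_zero, one_mul] at h₀
  rw [pow_one] at h₁
  rw [map_add, map_add, h₀, h₁, h₂]
  interval_cases r <;> simp

theorem trisect_expand_mul {r : ℕ} (hr : r < 3) (g f : ℤ⟦X⟧) :
    trisect r (g.expand 3 (by simp) * f) = g * trisect r f := by
  have h : g.expand 3 (by simp) * f = (g * trisect 0 f).expand 3 (by simp) +
      X * (g * trisect 1 f).expand 3 (by simp) + X ^ 2 * (g * trisect 2 f).expand 3 (by simp) := by
    conv_lhs => rw [eq_sum_trisect f]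
    simp only [map_mul]
    ring
  rw [h, trisect_dissection hr]
  interval_cases r <;> simp

theorem natCast_dvd_iff (m : ℕ) (f : ℤ⟦X⟧) :
    (m : ℤ⟦X⟧) ∣ f ↔ ∀ n, (m : ℤ) ∣ coeff n f := by
  have hm : (m : ℤ⟦X⟧) = C (m : ℤ) := by simp
  constructor
  · rintro ⟨g, rfl⟩ n
    rw [hm, coeff_C_mul]
    exact dvd_mul_right _ _
  · intro h
    choose g hg using h
    refine ⟨mk g, ?_⟩
    ext n
    rw [hm, coeff_C_mul, coeff_mk, hg]

theorem natCast_dvd_trisect {m : ℕ} {f : ℤ⟦X⟧} (r : ℕ) (h : (m : ℤ⟦X⟧) ∣ f) :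
    (m : ℤ⟦X⟧) ∣ trisect r f := by
  rw [natCast_dvd_iff] at h ⊢
  exact fun n ↦ coeff_trisect r n f ▸ h _

theorem natCast_dvd_iff_map_eq_zero (m : ℕ) (f : ℤ⟦X⟧) :
    (m : ℤ⟦X⟧) ∣ f ↔ map (Int.castRingHom (ZMod m)) f = 0 := by
  simp [natCast_dvd_iff, PowerSeries.ext_iff, ← ZMod.intCast_zmod_eq_zero_iff_dvd]

theorem natCast_dvd_expand_sub_pow (p : ℕ) [Fact p.Prime] (f : ℤ⟦X⟧) :
    (p : ℤ⟦X⟧) ∣ f.expand p (NeZero.ne p) - f ^ p := by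
  rw [natCast_dvd_iff_map_eq_zero, map_sub, map_expand, map_pow, sub_eq_zero]
  have h := MvPowerSeries.map_frobenius_expand p (NeZero.ne p)
    (f := map (Int.castRingHom (ZMod p)) f)
  rwa [ZMod.frobenius_zmod] at h

theorem trisect_one_evalNegHom_pedSeries :
    trisect 1 (evalNegHom pedSeries) *
      (ramPhi.expand 3 (by simp) ^ 3 + 8 * X * octSeries ^ 3) =
    ramPhi.expand 3 (by simp) * (3 * ramPsi.expand 3 (by simp) * ramPhi.expand 3 (by simp) -
      4 * ramPsi * ramPsi.expand 2 (by simp)) := by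
  have h : (ramPhi.expand 3 (by simp) ^ 3 + 8 * X * octSeries ^ 3).expand 3 (by simp) *
        evalNegHom pedSeries =
      (pentSeries * ramPhi.expand 3 (by simp) ^ 2 +
        4 * X * ramPsi.expand 3 (by simp) * octSeries ^ 2).expand 3 (by simp) +
      X * (ramPsi.expand 3 (by simp) * ramPhi.expand 3 (by simp) ^ 2 -
        2 * pentSeries * octSeries * ramPhi.expand 3 (by simp)).expand 3 (by simp) +
      X ^ 2 * (4 * pentSeries * octSeries ^ 2 -
        2 * ramPsi.expand 3 (by simp) * octSeries * ramPhi.expand 3 (by simp)).expand 3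
          (by simp) := by
    have h₁ := evalNegHom_pedSeries_mul_ramPhi
    have h₂ := ramPhi_three_dissection
    have h₃ := ramPsi_three_dissection
    simp only [map_mul, map_add, map_sub, map_pow, map_ofNat, ← expand_mul, expand_X,
      Nat.reduceMul]
    generalize ramPhi.expand 9 _ = f at *
    generalize octSeries.expand 3 _ = w at *
    generalize pentSeries.expand 3 _ = a at *
    generalize ramPsi.expand 9 _ = s at *
    rw [h₂, h₃] at h₁
    linear_combination (f ^ 2 - 2 * X * w * f + 4 * X ^ 2 * w ^ 2) * h₁
  have h' := congrArg (trisect 1) h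
  rw [trisect_expand_mul (by simp), trisect_dissection (by simp), if_neg (by simp),
    if_pos rfl] at h'
  linear_combination h' - 2 * ramPhi.expand 3 (by simp) * pentSeries_mul_octSeries

theorem isUnit_of_constantCoeff_eq_one {f : ℤ⟦X⟧} (h : constantCoeff f = 1) : IsUnit f :=
  isUnit_iff_constantCoeff.mpr (h ▸ isUnit_one)

theorem three_dvd_trisect_trisect :
    ((3 : ℕ) : ℤ⟦X⟧) ∣ trisect 2 (trisect 1 (evalNegHom pedSeries)) := by
  have h := trisect_one_evalNegHom_pedSeries
  obtain ⟨k₁, hk₁⟩ := natCast_dvd_expand_sub_pow 3 (ramPhi.expand 3 (by simp))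
  obtain ⟨k₂, hk₂⟩ := natCast_dvd_expand_sub_pow 3 octSeries
  obtain ⟨k₃, hk₃⟩ := natCast_dvd_expand_sub_pow 3 ramPhi
  obtain ⟨k₄, hk₄⟩ := natCast_dvd_expand_sub_pow 3 ramPsi
  have hd := ramPhi_three_dissection
  rw [← expand_mul] at hk₁
  simp only [Nat.reduceMul, Nat.cast_ofNat] at *
  have key : (3 : ℤ⟦X⟧) ∣
      trisect 1 (evalNegHom pedSeries) + ramPsi.expand 3 (by simp) * ramPhi := by
    rw [← (isUnit_of_constantCoeff_eq_one constantCoeff_ramPhi).dvd_mul_left]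
    generalize ramPhi.expand 9 _ = f9 at *
    generalize ramPhi.expand 3 _ = f3 at *
    generalize octSeries.expand 3 _ = w3 at *
    generalize trisect 1 (evalNegHom pedSeries) = H at *
    have hs := ramPsi_sq
    generalize ramPsi.expand 2 _ = s2 at *
    generalize ramPsi.expand 3 _ = s3 at *
    refine ⟨-2 * H * X * octSeries ^ 3 + H * k₁ + 2 * H * X * k₂ + s3 * f3 ^ 2 -
      f3 * ramPsi * s2 - k₃ * ramPsi * s2 + ramPhi ^ 2 * k₄, ?_⟩
    linear_combination H * hd + H * hk₁ + 2 * X * H * hk₂ + h + ramPhi ^ 2 * hk₄ +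
      ramPhi ^ 2 * ramPsi * hs - ramPsi * s2 * hk₃
  have := natCast_dvd_trisect (m := 3) 2 key
  rw [map_add, trisect_expand_mul (by simp)] at this
  have h0 : trisect 2 ramPhi = 0 := by
    have h := trisect_dissection (r := 2) (by simp) (ramPhi.expand 3 (by simp)) (2 * octSeries) 0
    rw [map_mul, map_ofNat, ← expand_mul, map_zero, if_neg (by simp), if_neg (by simp)] at h
    rw [← h]
    congr 1
    linear_combination hd
  simpa [h0] using this

theorem eight_dvd_trisect_trisect :
    ((8 : ℕ) : ℤ⟦X⟧) ∣ trisect 2 (trisect 1 (evalNegHom pedSeries)) +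
      4 * (pentSeries * ramPsi.expand 6 (by simp)) := by
  have h := trisect_one_evalNegHom_pedSeries
  have hu : constantCoeff (ramPhi.expand 3 (by simp)) = 1 := by
    rw [constantCoeff_expand, constantCoeff_ramPhi]
  have h₁ : ((8 : ℕ) : ℤ⟦X⟧) ∣ (ramPhi ^ 2).expand 3 (by simp) *
      trisect 1 (evalNegHom pedSeries) + ((-3 * ramPsi * ramPhi).expand 3 (by simp) +
        (4 : ℤ⟦X⟧).expand 3 (by simp) * (ramPsi * ramPsi.expand 2 (by simp))) := by
    rw [← (isUnit_of_constantCoeff_eq_one hu).dvd_mul_left]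
    refine ⟨-X * octSeries ^ 3 * trisect 1 (evalNegHom pedSeries), ?_⟩
    simp only [map_mul, map_neg, map_pow, map_ofNat, Nat.cast_ofNat]
    linear_combination h
  have h₂ : trisect 2 (ramPsi * ramPsi.expand 2 (by simp)) =
      pentSeries * ramPsi.expand 6 (by simp) := by
    have h := trisect_dissection (r := 2) (by simp)
      (pentSeries * pentSeries.expand 2 (by simp) +
        X * ramPsi.expand 3 (by simp) * ramPsi.expand 6 (by simp))
      (ramPsi.expand 3 (by simp) * pentSeries.expand 2 (by simp))
      (pentSeries * ramPsi.expand 6 (by simp))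
    rw [if_neg (by simp), if_neg (by simp)] at h
    rw [← h]
    congr 1
    have h₃ := ramPsi_three_dissection
    have h₄ := congrArg (expand 2 (by simp)) h₃
    conv_lhs => rw [h₄]
    conv_lhs => enter [1]; rw [h₃]
    simp only [map_mul, map_add, ← expand_mul, expand_X, Nat.reduceMul]
    ring
  have h₅ := natCast_dvd_trisect 2 h₁
  have h₆ := trisect_dissection (r := 2) (by simp) (-3 * ramPsi * ramPhi) 0 0
  rw [map_add, map_add, trisect_expand_mul (by simp), trisect_expand_mul (by simp), h₂,
    show trisect 2 ((-3 * ramPsi * ramPhi).expand 3 (by simp)) = 0 by simpa using h₆] at h₅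
  obtain ⟨k, hk⟩ := h₅
  obtain ⟨y, -, hy⟩ := exists_ramPhi_eq
  rw [hy] at hk
  generalize trisect 2 (trisect 1 (evalNegHom pedSeries)) = G at *
  generalize pentSeries * ramPsi.expand 6 _ = B at *
  refine ⟨k - 4 * (y + y ^ 2) * k + 2 * (y + y ^ 2) * B + 2 * (y + y ^ 2) ^ 2 * G, ?_⟩
  push_cast at hk ⊢
  linear_combination (1 - 4 * (y + y ^ 2)) * hk

theorem coeff_pentSeries_mul_expand_ramPsi (n : ℕ) :
    coeff (25 * n + 9) (pentSeries * ramPsi.expand 6 (by simp)) = 0 := by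
  refine (isTheta_pentSeries.mul (isTheta_ramPsi.expand 6 (by simp))).coeff_eq_zero ?_
  rintro ⟨k, j⟩ h
  have hk := two_mul_natCast_pentagonal k
  have hj := natCast_triExp j
  dsimp only at h
  zify at h
  have h₁ : (6 * k - 1) ^ 2 + 18 * (4 * j + 1) ^ 2 = 600 * n + 235 := by
    linear_combination 24 * h - 12 * hk - 144 * hj
  generalize 6 * k - 1 = x at h₁
  generalize 4 * j + 1 = y at h₁
  have h₂ : x % 5 = 0 ∧ y % 5 = 0 := by
    have := congrArg (· % 5) h₁
    have hx : x % 5 = 0 ∨ x % 5 = 1 ∨ x % 5 = 2 ∨ x % 5 = 3 ∨ x % 5 = 4 := by omega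
    have hy : y % 5 = 0 ∨ y % 5 = 1 ∨ y % 5 = 2 ∨ y % 5 = 3 ∨ y % 5 = 4 := by omega
    rcases hx with hx | hx | hx | hx | hx <;> rcases hy with hy | hy | hy | hy | hy <;>
      simp [pow_two, Int.add_emod, Int.mul_emod, hx, hy] at this ⊢
  obtain ⟨a, rfl⟩ := Int.dvd_of_emod_eq_zero h₂.1
  obtain ⟨b, rfl⟩ := Int.dvd_of_emod_eq_zero h₂.2
  have : 25 * (a ^ 2 + 18 * b ^ 2) = 600 * n + 235 := by linear_combination h₁
  omega

theorem coeff_trisect_trisect (n : ℕ) : coeff n (trisect 2 (trisect 1 (evalNegHom pedSeries))) =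
    (-1) ^ (9 * n + 7) * (ped (9 * n + 7) : ℤ) := by
  rw [coeff_trisect, coeff_trisect, coeff_evalNegHom, pedSeries, coeff_mk,
    show 3 * (3 * n + 2) + 1 = 9 * n + 7 by ring]

theorem ped_225n_add_88 (n : ℕ) : ped (225 * n + 88) ≡ 0 [MOD 24] := by
  have h₃ := (natCast_dvd_iff _ _).mp three_dvd_trisect_trisect (25 * n + 9)
  have h₈ := (natCast_dvd_iff _ _).mp eight_dvd_trisect_trisect (25 * n + 9)
  have h4 : (4 : ℤ⟦X⟧) = C 4 := by simp
  rw [map_add, h4, coeff_C_mul, coeff_pentSeries_mul_expand_ramPsi, mul_zero, add_zero] at h₈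
  rw [coeff_trisect_trisect, (isUnit_one.neg.pow _).dvd_mul_left, Int.natCast_dvd_natCast,
    show 9 * (25 * n + 9) + 7 = 225 * n + 88 by ring] at h₃ h₈
  rw [Nat.modEq_zero_iff_dvd]
  omega
end
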